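/- If C is a permutation class containing only finitely many simple permutations, then the generating function of the set of Dumont permutations of the first kind in C is algebraic over ℚ[x]. -/

import Mathlib

/-- A permutation of length `n`. -/
abbrev Perm (n : ℕ) := Equiv.Perm (Fin n)

/-- `σ` is contained in `π`: there is a strictly increasing sequence of indices of `π`
on which `π` is order isomorphic to `σ`. -/
def Contains {m n : ℕ} (σ : Perm m) (π : Perm n) : Prop :=
  ∃ f : Fin m → Fin n, StrictMono f ∧ ∀ s t : Fin m, π (f s) < π (f t) ↔ σ s < σ t

/-- A permutation class: a downset in the containment order. -/
def IsPermClass (C : ∀ n, Set (Perm n)) : Prop :=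
  ∀ ⦃m n : ℕ⦄ (σ : Perm m) (π : Perm n), π ∈ C n → Contains σ π → σ ∈ C m

/-- A set of contiguous values. -/
def IsRange {n : ℕ} (I : Finset (Fin n)) : Prop :=
  ∀ ⦃i j l : Fin n⦄, i ∈ I → l ∈ I → i ≤ j → j ≤ l → j ∈ I

/-- An interval of `π`: a set of contiguous indices mapped to a set of contiguous values. -/
def IsPermInterval {n : ℕ} (π : Perm n) (I : Finset (Fin n)) : Prop :=
  IsRange I ∧ IsRange (I.image π)

/-- A permutation is simple if its only intervals have size `0`, `1`, or `n`. -/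
def IsSimple {n : ℕ} (π : Perm n) : Prop :=
  ∀ I : Finset (Fin n), IsPermInterval π I → I.card ≤ 1 ∨ I.card = n

/-- The set of simple permutations belonging to the class `C` is finite. -/
def FinitelyManySimples (C : ∀ n, Set (Perm n)) : Prop :=
  {p : Σ n : ℕ, Perm n | p.2 ∈ C p.1 ∧ IsSimple p.2}.Finite

/-- The generating function `∑_{n ≥ 1} |S_n| xⁿ` of a set of permutations. -/
noncomputable def genFun (S : ∀ n, Set (Perm n)) : PowerSeries ℚ :=
  PowerSeries.mk fun n => if n = 0 then 0 else (Nat.card (S n) : ℚ)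

/-- A power series `f` is algebraic over `ℚ[x]` if there is a nonzero polynomial
`P(x,y) ∈ ℚ[x][y]` with `P(x,f) = 0`. -/
def IsAlgebraicOverQx (f : PowerSeries ℚ) : Prop :=
  ∃ P : Polynomial (Polynomial ℚ), P ≠ 0 ∧
    Polynomial.eval₂ Polynomial.coeToPowerSeries.ringHom f P = 0

/-- `π` is a Dumont permutation of the first kind.  (Entries are `0`-based here, so the
entry at position `i` has `1`-based value `π i + 1`.)  Every even value is immediately
followed by a smaller value, and every odd value is immediately followed by a larger
value or occurs last. -/
def Dumont {n : ℕ} (π : Perm n) : Prop :=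
  ∀ i : Fin n,
    (Even ((π i : ℕ) + 1) → ∃ h : (i : ℕ) + 1 < n, π ⟨(i : ℕ) + 1, h⟩ < π i) ∧
    (Odd ((π i : ℕ) + 1) →
      (i : ℕ) + 1 = n ∨ ∃ h : (i : ℕ) + 1 < n, π i < π ⟨(i : ℕ) + 1, h⟩)

/-!
By the substitution decomposition, every permutation of length at least two is an inflation
`σ[α₁, …, α_m]` of a unique simple permutation `σ`. The blocks are unique too, except that for
`m = 2` one has to require that the first block is not itself a sum of the same kind (direct or
skew) as the whole. With finitely many simple permutations available, every permutation of the
class is thus built in a unique way by finitely many operations.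

Suppose that a map `f` into a finite set is such that its value at an inflation of a given simple
permutation depends only on its values at the blocks. Refining `f` so that it also records whether a
permutation is a direct or skew sum, the generating functions of its fibres satisfy a system
`F q = c q + ∑ ∏ F (t i)` whose products have at least two factors. All `F q` have constant
coefficient `0`, so the Jacobian matrix of the right-hand side has constant coefficient `0`,
and `1` minus it is invertible over the field of fractions. Hence every derivation over `ℚ(x)` kills
all `F q`, that is, they are algebraic.

Two such maps are needed. Membership in the class depends only on the patterns of bounded length of
a permutation, because the permutations built by finitely many inflation operations are well quasi
ordered by containment (Nash-Williams). For the Dumont condition, one records the parity of the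
length and which of the four parity conditions on the descents hold: values may be shifted by `0` or
`1`, since a block sits on top of the lower blocks, and the last entry, depending on the following
block, may or may not be a descent.
-/

section AlgebraicSystems

open MvPolynomial

theorem derivation_aeval_eq_sum_pderiv {R S M Q : Type*} [CommRing R] [CommRing S] [Algebra R S]
    [AddCommGroup M] [Module R M] [Module S M] [Fintype Q]
    (D : Derivation R S M) (F : Q → S) (p : MvPolynomial Q R) :
    D (aeval F p) = ∑ r, aeval F (pderiv r p) • D (F r) := by
  classical
  induction p using MvPolynomial.induction_on with
  | C a => simp
  | add p q hp hq => simp [hp, hq, add_smul, Finset.sum_add_distrib]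
  | mul_X p i hp =>
    have derivative_of_factor :
        ∑ r, (aeval F p * aeval F (Pi.single (M := fun _ => MvPolynomial Q R) r 1 i)) • D (F r) =
          aeval F p • D (F i) := by
      rw [Finset.sum_eq_single i (fun r _ hr => by simp [hr.symm]) (by simp)]
      simp
    simp only [map_mul, aeval_X, Derivation.leibniz, hp, smul_eq_mul, map_add, add_smul,
      Finset.sum_add_distrib, pderiv_X, Finset.smul_sum, smul_smul, derivative_of_factor]

/-- The Jacobian matrix at the point `F` of the system of polynomials `P`. -/
noncomputable def jacobianAt {R S Q : Type*} [CommRing R] [CommRing S] [Algebra R S]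
    (P : Q → MvPolynomial Q R) (F : Q → S) : Matrix Q Q S :=
  Matrix.of fun q r => aeval F (pderiv r (P q))

theorem jacobianAt_algebraMap {R K S E Q : Type*} [CommRing R] [CommRing K] [CommRing S]
    [CommRing E] [Algebra R K] [Algebra R S] [Algebra R E] [Algebra S E] [Algebra K E]
    [IsScalarTower R K E] [IsScalarTower R S E] (P : Q → MvPolynomial Q R) (F : Q → S) :
    jacobianAt (fun q => map (algebraMap R K) (P q)) (fun q => algebraMap S E (F q)) =
      (jacobianAt P F).map (algebraMap S E) := by
  ext q r
  simp only [jacobianAt, Matrix.of_apply, Matrix.map_apply, pderiv_map, aeval_map_algebraMap]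
  exact aeval_algebraMap_apply E F _

theorem derivation_eq_zero_of_det_ne_zero {K L M Q : Type*} [CommRing K] [Field L] [Algebra K L]
    [AddCommGroup M] [Module K M] [Module L M] [Fintype Q] [DecidableEq Q]
    (D : Derivation K L M) {F : Q → L} {P : Q → MvPolynomial Q K} (hF : ∀ q, F q = aeval F (P q))
    (hdet : (1 - jacobianAt P F).det ≠ 0) (r : Q) : D (F r) = 0 := by
  set J := 1 - jacobianAt P F with hJ
  have linear_system (q : Q) : ∑ s, J q s • D (F s) = 0 := by
    have chain_rule := derivation_aeval_eq_sum_pderiv D F (P q)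
    rw [← hF q] at chain_rule
    simp [hJ, jacobianAt, sub_smul, Matrix.one_apply, ← chain_rule]
  have det_smul : J.det • D (F r) = ∑ q, J.adjugate r q • ∑ s, J q s • D (F s) := by
    simp only [Finset.smul_sum, smul_smul]
    rw [Finset.sum_comm]
    simp only [← Finset.sum_smul, ← Matrix.mul_apply, Matrix.adjugate_mul, Matrix.smul_apply,
      Matrix.one_apply]
    simp
  simp only [linear_system, smul_zero, Finset.sum_const_zero] at det_smul
  exact (smul_eq_zero.mp det_smul).resolve_left hdet

theorem isAlgebraic_of_kaehlerDifferential_eq_zero {K L : Type*} [Field K] [Field L] [Algebra K L]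
    {s : Set L} (hs : s.Finite) (htop : IntermediateField.adjoin K s = ⊤)
    (hD : ∀ x ∈ s, KaehlerDifferential.D K L x = 0) : Algebra.IsAlgebraic K L := by
  have differential_eq_zero (x : L) : KaehlerDifferential.D K L x = 0 := by
    have hx : x ∈ IntermediateField.adjoin K s := htop ▸ IntermediateField.mem_top
    induction hx using IntermediateField.adjoin_induction with
    | mem x hx => exact hD x hx
    | algebraMap x => simp
    | add x y _ _ hx hy => simp [hx, hy]
    | inv x _ hx => rw [Derivation.leibniz_inv, hx, smul_zero]
    | mul x y _ _ hx hy => simp [hx, hy]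
  have : Algebra.FormallyUnramified K L := by
    refine ⟨?_⟩
    rw [← Submodule.subsingleton_iff L, ← subsingleton_iff_bot_eq_top,
      ← KaehlerDifferential.span_range_derivation, eq_comm, Submodule.span_eq_bot]
    rintro _ ⟨x, rfl⟩
    exact differential_eq_zero x
  have : Algebra.EssFiniteType K (⊤ : IntermediateField K L) :=
    IntermediateField.essFiniteType_iff.mpr (htop ▸ IntermediateField.fg_adjoin_of_finite hs)
  have : Algebra.EssFiniteType K L :=
    (Algebra.EssFiniteType.iff_of_algEquiv IntermediateField.topEquiv).mp this
  have := Algebra.FormallyUnramified.isSeparable K L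
  infer_instance

theorem isAlgebraic_of_field_system {K E Q : Type*} [Field K] [Field E] [Algebra K E]
    [Fintype Q] [DecidableEq Q] {F : Q → E} {P : Q → MvPolynomial Q K}
    (hF : ∀ q, F q = aeval F (P q)) (hdet : (1 - jacobianAt P F).det ≠ 0) (q : Q) :
    IsAlgebraic K (F q) := by
  let L := IntermediateField.adjoin K (Set.range F)
  let G : Q → L := fun q => ⟨F q, IntermediateField.subset_adjoin _ _ ⟨q, rfl⟩⟩
  have hG (q : Q) : G q = aeval G (P q) :=
    Subtype.ext ((hF q).trans (aeval_algebraMap_apply E G (P q)))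
  have adjoin_eq_top : IntermediateField.adjoin K (Set.range G) = ⊤ := by
    apply IntermediateField.lift_injective L
    rw [IntermediateField.lift_adjoin, IntermediateField.lift_top, ← Set.range_comp]
    rfl
  have det_ne_zero : (1 - jacobianAt P G).det ≠ 0 := by
    refine fun h => hdet ?_
    have map_jacobian : jacobianAt P F = (algebraMap L E).mapMatrix (jacobianAt P G) := by
      ext q r
      exact aeval_algebraMap_apply E G _
    rw [map_jacobian, ← map_one (algebraMap L E).mapMatrix, ← map_sub, ← RingHom.map_det, h,
      map_zero]
  have : Algebra.IsAlgebraic K L := by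
    refine isAlgebraic_of_kaehlerDifferential_eq_zero (Set.finite_range G) adjoin_eq_top ?_
    rintro _ ⟨r, rfl⟩
    exact derivation_eq_zero_of_det_ne_zero _ hG det_ne_zero r
  exact (this.isAlgebraic (G q)).algebraMap

theorem isAlgebraic_of_system {R S Q : Type*} [CommRing R] [IsDomain R] [CommRing S] [IsDomain S]
    [Algebra R S] [FaithfulSMul R S] [Fintype Q] [DecidableEq Q] {F : Q → S}
    {P : Q → MvPolynomial Q R} (hF : ∀ q, F q = aeval F (P q))
    (hdet : (1 - jacobianAt P F).det ≠ 0) (q : Q) : IsAlgebraic R (F q) := by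
  let K := FractionRing R
  let E := FractionRing S
  have : FaithfulSMul R E := by
    rw [faithfulSMul_iff_algebraMap_injective, IsScalarTower.algebraMap_eq R S E]
    exact (FaithfulSMul.algebraMap_injective S E).comp (FaithfulSMul.algebraMap_injective R S)
  let : Algebra K E := FractionRing.liftAlgebra R E
  have injective := IsFractionRing.injective S E
  have algebraic_over_fractions : IsAlgebraic K (algebraMap S E (F q)) := by
    refine isAlgebraic_of_field_system (P := fun q => map (algebraMap R K) (P q))
      (F := fun q => algebraMap S E (F q)) (fun q => ?_) ?_ q
    · conv_lhs => rw [hF q]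
      rw [aeval_map_algebraMap]
      exact (aeval_algebraMap_apply E F _).symm
    · rw [jacobianAt_algebraMap]
      change (1 - (algebraMap S E).mapMatrix (jacobianAt P F)).det ≠ 0
      rw [← map_one (algebraMap S E).mapMatrix, ← map_sub, ← RingHom.map_det]
      exact (map_ne_zero_iff _ injective).mpr hdet
  exact (isAlgebraic_algebraMap_iff injective).mp
    ((IsFractionRing.isAlgebraic_iff R K E).mpr algebraic_over_fractions)

theorem isAlgebraic_of_powerSeries_system {k Q : Type*} [CommRing k] [IsDomain k] [Finite Q]
    {F : Q → PowerSeries k} {P : Q → MvPolynomial Q (Polynomial k)} (hF : ∀ q, F q = aeval F (P q))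
    (hP : ∀ q r, PowerSeries.constantCoeff (aeval F (pderiv r (P q))) = 0) (q : Q) :
    IsAlgebraic (Polynomial k) (F q) := by
  classical
  have := Fintype.ofFinite Q
  have : FaithfulSMul (Polynomial k) (PowerSeries k) :=
    (faithfulSMul_iff_algebraMap_injective _ _).mpr (Polynomial.coe_injective k)
  refine isAlgebraic_of_system hF (fun h => ?_) q
  have jacobian_constantCoeff : PowerSeries.constantCoeff.mapMatrix (jacobianAt P F) = 0 := by
    ext q r
    exact hP q r
  have := congrArg PowerSeries.constantCoeff h
  rw [RingHom.map_det, map_sub, map_one, jacobian_constantCoeff] at this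
  simp at this

theorem constantCoeff_aeval_pderiv_prod {k Q ι : Type*} [CommRing k] [Fintype ι] [Nontrivial ι]
    {F : Q → PowerSeries k} (hF : ∀ q, PowerSeries.constantCoeff (F q) = 0) (t : ι → Q) (r : Q) :
    PowerSeries.constantCoeff
      (aeval F (pderiv r (∏ i, X (t i) : MvPolynomial Q (Polynomial k)))) = 0 := by
  classical
  obtain ⟨i, j, hij⟩ := exists_pair_ne ι
  rw [← Finset.mul_prod_erase _ _ (Finset.mem_univ i)]
  have aeval_rest : PowerSeries.constantCoeff (aeval F (∏ l ∈ Finset.univ.erase i,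
      X (t l) : MvPolynomial Q (Polynomial k))) = 0 := by
    rw [map_prod, map_prod]
    exact Finset.prod_eq_zero (Finset.mem_erase.mpr ⟨hij.symm, Finset.mem_univ j⟩) (by simp [hF])
  simp only [Derivation.leibniz, smul_eq_mul, map_add, map_mul, aeval_X, hF, aeval_rest, zero_mul,
    add_zero]

theorem isAlgebraic_of_multiplicative_system {k Q : Type*} [CommRing k] [IsDomain k] [Finite Q]
    {F : Q → PowerSeries k} (hF : ∀ q, PowerSeries.constantCoeff (F q) = 0)
    {κ : Q → Type*} [∀ q, Fintype (κ q)] {m : ∀ q, κ q → ℕ} (hm : ∀ q j, 2 ≤ m q j)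
    (t : ∀ q j, Fin (m q j) → Q) (c : Q → Polynomial k)
    (h : ∀ q, F q = c q + ∑ j, ∏ i, F (t q j i)) (q : Q) :
    IsAlgebraic (Polynomial k) (F q) := by
  refine isAlgebraic_of_powerSeries_system
    (P := fun q => C (c q) + ∑ j, ∏ i, X (t q j i)) (fun q => ?_) (fun q r => ?_) q
  · simp only [map_add, aeval_C, map_sum, map_prod, aeval_X]
    exact h q
  · simp only [map_add, pderiv_C, map_sum, zero_add]
    refine Finset.sum_eq_zero fun j _ => ?_
    have := Fin.nontrivial_iff_two_le.mpr (hm q j)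
    exact constantCoeff_aeval_pderiv_prod hF (t q j) r

end AlgebraicSystems

section SizeGenFun

/-- The generating function counting the elements of `A` by size. A size with infinitely many
elements in `A` contributes the coefficient `0`. -/
noncomputable def sizeGenFun {T : Type*} (size : T → ℕ) (A : Set T) : PowerSeries ℚ :=
  PowerSeries.mk fun n => ({x ∈ A | size x = n}.ncard : ℚ)

variable {T : Type*} {size : T → ℕ}

theorem sizeGenFun_union (hsize : ∀ n, {x | size x = n}.Finite) {A B : Set T}
    (hAB : Disjoint A B) : sizeGenFun size (A ∪ B) = sizeGenFun size A + sizeGenFun size B := by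
  ext n
  have hfin (C : Set T) : {x ∈ C | size x = n}.Finite := (hsize n).subset fun _ hx => hx.2
  simp only [sizeGenFun, map_add, PowerSeries.coeff_mk, ← Nat.cast_add]
  rw [← Set.ncard_union_eq (hAB.mono (fun _ hx => hx.1) fun _ hx => hx.1) (hfin A) (hfin B)]
  congr 2
  ext x
  simp only [Set.mem_ofPred_eq, Set.mem_union, or_and_right]

theorem sizeGenFun_iUnion {κ : Type*} [Fintype κ] (hsize : ∀ n, {x | size x = n}.Finite)
    {A : κ → Set T} (hA : Pairwise fun k l => Disjoint (A k) (A l)) :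
    sizeGenFun size (⋃ k, A k) = ∑ k, sizeGenFun size (A k) := by
  ext n
  have hfin (k : κ) : {x ∈ A k | size x = n}.Finite := (hsize n).subset fun _ hx => hx.2
  simp only [sizeGenFun, map_sum, PowerSeries.coeff_mk, ← Nat.cast_sum]
  rw [← finsum_eq_sum_of_fintype, ← Set.ncard_iUnion_of_finite hfin
    fun k l hkl => (hA hkl).mono (fun _ hx => hx.1) fun _ hx => hx.1]
  congr 2
  ext x
  simp

theorem sizeGenFun_image {T' : Type*} {size' : T' → ℕ} {f : T → T'} {A : Set T}
    (hf : A.InjOn f) (hsize : ∀ x, size' (f x) = size x) :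
    sizeGenFun size' (f '' A) = sizeGenFun size A := by
  ext n
  simp only [sizeGenFun, PowerSeries.coeff_mk]
  rw [← (hf.mono fun x (hx : x ∈ {x ∈ A | size x = n}) => hx.1).ncard_image]
  congr 2
  ext y
  constructor
  · rintro ⟨⟨x, hx, rfl⟩, hn⟩
    exact ⟨x, ⟨hx, (hsize x).symm.trans hn⟩, rfl⟩
  · rintro ⟨x, ⟨hx, hn⟩, rfl⟩
    exact ⟨⟨x, hx, rfl⟩, (hsize x).trans hn⟩

theorem ncard_pi {ι : Type*} [Fintype ι] {T : ι → Type*} (A : ∀ i, Set (T i)) :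
    (Set.univ.pi A).ncard = ∏ i, (A i).ncard := by
  simp only [← Nat.card_coe_set_eq, ← Nat.card_pi]
  exact Nat.card_congr (Equiv.Set.univPi A)

theorem sizeGenFun_pi {ι : Type*} [Fintype ι] (hsize : ∀ n, {x | size x = n}.Finite)
    (A : ι → Set T) : sizeGenFun (fun x : ι → T => ∑ i, size (x i)) (Set.univ.pi A) =
      ∏ i, sizeGenFun size (A i) := by
  classical
  ext n
  have fibre_eq : {x ∈ Set.univ.pi A | ∑ i, size (x i) = n} =
      ⋃ l : Finset.finsuppAntidiag (Finset.univ : Finset ι) n,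
        Set.univ.pi fun i => {y ∈ A i | size y = l.1 i} := by
    ext x
    simp only [Set.mem_ofPred_eq, Set.mem_iUnion, Set.mem_univ_pi]
    constructor
    · rintro ⟨hx, hn⟩
      exact ⟨⟨Finsupp.equivFunOnFinite.symm fun i => size (x i),
        by simpa [Finset.mem_finsuppAntidiag] using hn⟩, fun i => ⟨hx i, rfl⟩⟩
    · rintro ⟨⟨l, hl⟩, hx⟩
      refine ⟨fun i => (hx i).1, ?_⟩
      simp only [(hx _).2]
      exact (Finset.mem_finsuppAntidiag.mp hl).1
  have pieces_disjoint : Pairwise fun l l' : Finset.finsuppAntidiag (Finset.univ : Finset ι) n =>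
      Disjoint (Set.univ.pi fun i => {y ∈ A i | size y = l.1 i})
        (Set.univ.pi fun i => {y ∈ A i | size y = l'.1 i}) := fun l l' hne =>
    Set.disjoint_left.mpr fun x hx hx' => hne <| Subtype.ext <| Finsupp.ext fun i =>
      (hx i trivial).2.symm.trans (hx' i trivial).2
  rw [PowerSeries.coeff_prod, ← Finset.sum_coe_sort]
  simp only [sizeGenFun, PowerSeries.coeff_mk, ← Nat.cast_prod, ← Nat.cast_sum, ← ncard_pi]
  rw [fibre_eq, Set.ncard_iUnion_of_finite (fun l => ?_) pieces_disjoint, finsum_eq_sum_of_fintype]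
  exact Set.Finite.pi fun i => (hsize (l.1 i)).subset fun _ hy => hy.2

theorem sizeGenFun_of_forall_size_eq {A : Set T} {n : ℕ} (h : ∀ x ∈ A, size x = n) :
    sizeGenFun size A = (Polynomial.monomial n (A.ncard : ℚ) : Polynomial ℚ) := by
  ext j
  rw [sizeGenFun, PowerSeries.coeff_mk, Polynomial.coeff_coe, Polynomial.coeff_monomial]
  split_ifs with hj
  · congr 2
    ext x
    exact ⟨fun hx => hx.1, fun hx => ⟨hx, (h x hx).trans hj⟩⟩
  · have fibre_empty : {x ∈ A | size x = j} = ∅ :=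
      Set.eq_empty_of_forall_notMem fun x hx => hj ((h x hx.1).symm.trans hx.2)
    rw [fibre_empty, Set.ncard_empty, Nat.cast_zero]

theorem constantCoeff_sizeGenFun {A : Set T} (h : ∀ x ∈ A, 0 < size x) :
    PowerSeries.constantCoeff (sizeGenFun size A) = 0 := by
  have fibre_empty : {x ∈ A | size x = 0} = ∅ :=
    Set.eq_empty_of_forall_notMem fun x hx => (h x hx.1).ne' hx.2
  rw [← PowerSeries.coeff_zero_eq_constantCoeff_apply, sizeGenFun, PowerSeries.coeff_mk,
    fibre_empty, Set.ncard_empty, Nat.cast_zero]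

end SizeGenFun

section Patterns

/-- A permutation of unspecified length. -/
abbrev SizedPerm := Σ n : ℕ, Perm n

/-- The sequence of positions `f` is an occurrence of the pattern `σ` in `π`. -/
structure IsOccurrence {m n : ℕ} (σ : Perm m) (π : Perm n) (f : Fin m → Fin n) : Prop where
  strictMono : StrictMono f
  lt_iff : ∀ s t, π (f s) < π (f t) ↔ σ s < σ t

variable {l m n : ℕ} {ρ : Perm l} {σ : Perm m} {π : Perm n}

theorem contains_iff_exists_isOccurrence : Contains σ π ↔ ∃ f, IsOccurrence σ π f :=
  exists_congr fun _ => ⟨fun h => ⟨h.1, h.2⟩, fun h => ⟨h.1, h.2⟩⟩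

theorem IsOccurrence.contains {f : Fin m → Fin n} (hf : IsOccurrence σ π f) : Contains σ π :=
  contains_iff_exists_isOccurrence.mpr ⟨f, hf⟩

theorem IsOccurrence.refl (π : Perm n) : IsOccurrence π π id :=
  ⟨strictMono_id, fun _ _ => Iff.rfl⟩

theorem IsOccurrence.comp {f : Fin m → Fin n} {g : Fin l → Fin m} (hf : IsOccurrence σ π f)
    (hg : IsOccurrence ρ σ g) : IsOccurrence ρ π (f ∘ g) :=
  ⟨hf.strictMono.comp hg.strictMono, fun _ _ => (hf.lt_iff _ _).trans (hg.lt_iff _ _)⟩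

theorem Contains.refl (π : Perm n) : Contains π π :=
  (IsOccurrence.refl π).contains

theorem Contains.trans (h : Contains ρ σ) (h' : Contains σ π) : Contains ρ π := by
  obtain ⟨g, hg⟩ := contains_iff_exists_isOccurrence.mp h
  obtain ⟨f, hf⟩ := contains_iff_exists_isOccurrence.mp h'
  exact (hf.comp hg).contains

theorem Contains.length_le (h : Contains σ π) : m ≤ n := by
  obtain ⟨f, hf, -⟩ := h
  simpa using Fintype.card_le_of_injective f hf.injective

theorem perm_eq_of_lt_iff {π τ : Perm n} (h : ∀ s t, π s < π t ↔ τ s < τ t) : π = τ := by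
  have strictMono : StrictMono fun x => π (τ.symm x) := fun x y hxy => by
    rw [h]
    simpa using hxy
  ext s
  simpa using congrArg Fin.val (congrFun strictMono.eq_id (τ s))

theorem Contains.sigma_eq (h : Contains σ π) (hn : n ≤ m) :
    (⟨m, σ⟩ : SizedPerm) = ⟨n, π⟩ := by
  obtain rfl : m = n := le_antisymm h.length_le hn
  obtain ⟨f, hf, hσπ⟩ := h
  obtain rfl : f = id := hf.eq_id
  rw [perm_eq_of_lt_iff hσπ]

theorem IsOccurrence.contains_of_range_subset {f : Fin m → Fin n} {g : Fin l → Fin n}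
    (hf : IsOccurrence σ π f) (hg : IsOccurrence ρ π g) (hfg : Set.range f ⊆ Set.range g) :
    Contains σ ρ := by
  choose k hk using fun s => hfg ⟨s, rfl⟩
  refine ⟨k, fun s t hst => ?_, fun s t => ?_⟩
  · rw [← hg.strictMono.lt_iff_lt, hk, hk]
    exact hf.strictMono hst
  · rw [← hg.lt_iff, hk, hk, hf.lt_iff]

theorem IsOccurrence.sigma_eq_of_range_eq {f : Fin m → Fin n} {g : Fin l → Fin n}
    (hf : IsOccurrence σ π f) (hg : IsOccurrence ρ π g) (hfg : Set.range f = Set.range g) :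
    (⟨m, σ⟩ : SizedPerm) = ⟨l, ρ⟩ :=
  (hf.contains_of_range_subset hg hfg.subset).sigma_eq
    (hg.contains_of_range_subset hf hfg.superset).length_le

theorem exists_perm_lt_iff {A : Type*} [LinearOrder A] {v : Fin n → A}
    (hv : Function.Injective v) : ∃ σ : Perm n, ∀ a b, σ a < σ b ↔ v a < v b := by
  let e := (Finset.univ.image v).orderIsoOfFin (k := n)
    (by rw [Finset.card_image_of_injective _ hv, Finset.card_univ, Fintype.card_fin])
  let rank : Fin n → Fin n := fun a => e.symm ⟨v a, by simp⟩
  have rank_injective : Function.Injective rank := fun a b h => hv (by simpa [rank] using h)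
  exact ⟨Equiv.ofBijective rank (Finite.injective_iff_bijective.mp rank_injective),
    fun a b => by simp [rank]⟩

theorem exists_isOccurrence_range_eq (π : Perm n) (s : Set (Fin n)) :
    ∃ (δ : Perm s.ncard) (f : Fin s.ncard → Fin n), IsOccurrence δ π f ∧ Set.range f = s := by
  let f := s.toFinite.toFinset.orderEmbOfFin (Set.ncard_eq_toFinset_card s).symm
  obtain ⟨δ, hδ⟩ := exists_perm_lt_iff (π.injective.comp f.injective)
  exact ⟨δ, f, ⟨f.strictMono, fun a b => (hδ a b).symm⟩, by simp [f]⟩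

/-- The pattern formed by the entries of `π` at the positions in `s`. -/
noncomputable def patternOn (π : Perm n) (s : Set (Fin n)) : SizedPerm :=
  ⟨s.ncard, (exists_isOccurrence_range_eq π s).choose⟩

theorem exists_isOccurrence_patternOn (π : Perm n) (s : Set (Fin n)) :
    ∃ f, IsOccurrence (patternOn π s).2 π f ∧ Set.range f = s :=
  (exists_isOccurrence_range_eq π s).choose_spec

theorem contains_patternOn (π : Perm n) (s : Set (Fin n)) : Contains (patternOn π s).2 π := by
  obtain ⟨f, hf, -⟩ := exists_isOccurrence_patternOn π s
  exact hf.contains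

theorem IsOccurrence.patternOn_eq {f : Fin m → Fin n} (hf : IsOccurrence σ π f)
    {s : Set (Fin n)} (hs : Set.range f = s) : patternOn π s = ⟨m, σ⟩ := by
  obtain ⟨g, hg, range_g⟩ := exists_isOccurrence_patternOn π s
  exact hg.sigma_eq_of_range_eq hf (range_g.trans hs.symm)

end Patterns

section Inflations

theorem sum_fin_castLE_eq_sum_Iio {M : Type*} [AddCommMonoid M] {m : ℕ} (n : Fin m → M)
    (k : Fin m) : ∑ i : Fin k, n (Fin.castLE k.2.le i) = ∑ i ∈ Finset.Iio k, n i :=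
  Finset.sum_nbij (Fin.castLE k.2.le) (by simp [Fin.lt_def])
    (Fin.castLE_injective k.2.le).injOn (fun j hj => ⟨⟨j, by simpa using hj⟩, by simp⟩)
    fun _ _ => rfl

theorem sum_Iio_add_lt_iff {ι : Type*} [LinearOrder ι] [LocallyFiniteOrderBot ι] (n : ι → ℕ)
    {i j : ι} {a b : ℕ} (ha : a < n i) (hb : b < n j) :
    ∑ k ∈ Finset.Iio i, n k + a < ∑ k ∈ Finset.Iio j, n k + b ↔ i < j ∨ i = j ∧ a < b := by
  have sum_add_le {i j : ι} (hij : i < j) :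
      ∑ k ∈ Finset.Iio i, n k + n i ≤ ∑ k ∈ Finset.Iio j, n k := by
    rw [add_comm, ← Finset.sum_insert (by simp)]
    refine Finset.sum_le_sum_of_subset (Finset.insert_subset (by simpa using hij) ?_)
    exact Finset.Iio_subset_Iio hij.le
  rcases lt_trichotomy i j with h | rfl | h
  · have := sum_add_le h
    simp only [h, true_or, iff_true]
    omega
  · simp
  · have := sum_add_le h
    simp only [h.not_gt, h.ne', false_and, or_self, iff_false]
    omega

variable {m : ℕ}

/-- The inflation `σ[α₁, …, α_m]`: the `i`-th entry of `σ` is replaced by a block of consecutive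
entries with consecutive values forming the pattern `α_i`. -/
def inflate (σ : Perm m) (α : Fin m → SizedPerm) : Perm (∑ i, (α i).1) :=
  finSigmaFinEquiv.symm.trans
    ((Equiv.sigmaCongr σ fun i => (α i).2.trans (finCongr (by simp))).trans
      ((finSigmaFinEquiv (n := fun j => (α (σ.symm j)).1)).trans
        (finCongr (Equiv.sum_comp σ.symm fun i => (α i).1))))

/-- The position of the `a`-th entry of the `i`-th block in an inflation by `α`. -/
def blockPos (α : Fin m → SizedPerm) (i : Fin m) (a : Fin (α i).1) : Fin (∑ i, (α i).1) :=
  finSigmaFinEquiv ⟨i, a⟩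

/-- The index of the block containing the position `p` in an inflation by `α`. -/
def blockIndex (α : Fin m → SizedPerm) (p : Fin (∑ i, (α i).1)) : Fin m :=
  (finSigmaFinEquiv.symm p).1

variable (σ : Perm m) (α : Fin m → SizedPerm)

@[simp]
theorem blockIndex_blockPos (i : Fin m) (a : Fin (α i).1) :
    blockIndex α (blockPos α i a) = i := by
  simp [blockIndex, blockPos]

theorem exists_eq_blockPos (p : Fin (∑ i, (α i).1)) : ∃ i a, p = blockPos α i a :=
  ⟨_, _, (finSigmaFinEquiv.apply_symm_apply p).symm⟩

theorem range_blockPos (i : Fin m) : Set.range (blockPos α i) = blockIndex α ⁻¹' {i} := by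
  ext p
  obtain ⟨j, a, rfl⟩ := exists_eq_blockPos α p
  constructor
  · rintro ⟨b, hb⟩
    rw [← hb]
    exact blockIndex_blockPos α i b
  · intro hj
    obtain rfl : j = i := (blockIndex_blockPos α j a).symm.trans hj
    exact ⟨a, rfl⟩

theorem blockPos_val (i : Fin m) (a : Fin (α i).1) :
    (blockPos α i a : ℕ) = ∑ k ∈ Finset.Iio i, (α k).1 + a := by
  rw [blockPos, finSigmaFinEquiv_apply, ← sum_fin_castLE_eq_sum_Iio]

theorem inflate_blockPos_val (i : Fin m) (a : Fin (α i).1) :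
    (inflate σ α (blockPos α i a) : ℕ) =
      ∑ k ∈ Finset.Iio (σ i), (α (σ.symm k)).1 + (α i).2 a := by
  have unfold_inflate : (inflate σ α (blockPos α i a) : ℕ) =
      finSigmaFinEquiv (n := fun j => (α (σ.symm j)).1)
        ⟨σ i, finCongr (by simp) ((α i).2 a)⟩ := by
    simp only [inflate, blockPos, Equiv.trans_apply, Equiv.symm_apply_apply]
    rfl
  rw [unfold_inflate, finSigmaFinEquiv_apply]
  exact congrArg (· + _) (sum_fin_castLE_eq_sum_Iio (fun k => (α (σ.symm k)).1) (σ i))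

variable {α} {i j : Fin m} {a : Fin (α i).1}

theorem blockPos_lt_iff {b : Fin (α j).1} :
    blockPos α i a < blockPos α j b ↔ i < j ∨ i = j ∧ (a : ℕ) < b := by
  rw [Fin.lt_def, blockPos_val, blockPos_val]
  exact sum_Iio_add_lt_iff (fun i => (α i).1) a.2 b.2

theorem inflate_lt_iff {b : Fin (α j).1} :
    inflate σ α (blockPos α i a) < inflate σ α (blockPos α j b) ↔
      σ i < σ j ∨ i = j ∧ ((α i).2 a : ℕ) < (α j).2 b := by
  rw [Fin.lt_def, inflate_blockPos_val, inflate_blockPos_val,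
    sum_Iio_add_lt_iff (fun i => (α (σ.symm i)).1) (by simp) (by simp), σ.injective.eq_iff]

variable (α) in
theorem isOccurrence_blockPos (i : Fin m) :
    IsOccurrence (α i).2 (inflate σ α) (blockPos α i) :=
  ⟨fun _ _ h => blockPos_lt_iff.mpr (Or.inr ⟨rfl, h⟩), fun a b => by simp [inflate_lt_iff]⟩

/-- The map `b` sends the positions of `π` to those of `σ` in such a way that `π` is an inflation
of `σ` whose `i`-th block, empty unless `i` is in the range of `b`, occupies the positions
`b ⁻¹' {i}`. -/
structure IsBlockMap {n m : ℕ} (π : Perm n) (σ : Perm m) (b : Fin n → Fin m) : Prop where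
  monotone : Monotone b
  lt_iff : ∀ p q, b p ≠ b q → (π p < π q ↔ σ (b p) < σ (b q))

/-- The `i`-th block of `π` with respect to the map `b` from positions to blocks. -/
noncomputable def block {n : ℕ} (π : Perm n) (b : Fin n → Fin m) (i : Fin m) : SizedPerm :=
  patternOn π (b ⁻¹' {i})

variable (α) in
theorem isBlockMap_inflate : IsBlockMap (inflate σ α) σ (blockIndex α) where
  monotone p q hpq := by
    obtain ⟨i, a, rfl⟩ := exists_eq_blockPos α p
    obtain ⟨j, b, rfl⟩ := exists_eq_blockPos α q
    rw [blockIndex_blockPos, blockIndex_blockPos]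
    exact not_lt.mp fun hji => hpq.not_gt (blockPos_lt_iff.mpr (Or.inl hji))
  lt_iff p q := by
    obtain ⟨i, a, rfl⟩ := exists_eq_blockPos α p
    obtain ⟨j, b, rfl⟩ := exists_eq_blockPos α q
    rw [blockIndex_blockPos, blockIndex_blockPos]
    intro hij
    simp [inflate_lt_iff, hij]

theorem block_inflate (i : Fin m) : block (inflate σ α) (blockIndex α) i = α i :=
  (isOccurrence_blockPos σ α i).patternOn_eq (range_blockPos α i)

theorem blockIndex_surjective (hα : ∀ i, 0 < (α i).1) : Function.Surjective (blockIndex α) :=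
  fun i => ⟨blockPos α i ⟨0, hα i⟩, blockIndex_blockPos α i _⟩

variable {σ} {l n : ℕ} {π : Perm n} {τ : Perm l} {b : Fin n → Fin m}

theorem IsBlockMap.comp (hb : IsBlockMap π σ b) {f : Fin l → Fin n} (hf : IsOccurrence τ π f) :
    IsBlockMap τ σ (b ∘ f) :=
  ⟨hb.monotone.comp hf.strictMono.monotone,
    fun p q hpq => (hf.lt_iff p q).symm.trans (hb.lt_iff (f p) (f q) hpq)⟩

theorem IsBlockMap.exists_isOccurrence_inflate (hb : IsBlockMap π σ b)
    {g : ∀ i, Fin (α i).1 → Fin n} (hg : ∀ i, IsOccurrence (α i).2 π (g i))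
    (hgb : ∀ i a, b (g i a) = i) :
    ∃ f, IsOccurrence (inflate σ α) π f ∧ ∀ i a, f (blockPos α i a) = g i a := by
  have f_blockPos (i a) :
      (fun x : Σ i, Fin (α i).1 => g x.1 x.2) (finSigmaFinEquiv.symm (blockPos α i a)) = g i a := by
    rw [blockPos, Equiv.symm_apply_apply]
  refine ⟨fun p => g (finSigmaFinEquiv.symm p).1 (finSigmaFinEquiv.symm p).2, ?_, f_blockPos⟩
  constructor
  · intro p q hpq
    obtain ⟨i, a, rfl⟩ := exists_eq_blockPos α p
    obtain ⟨j, c, rfl⟩ := exists_eq_blockPos α q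
    simp only [f_blockPos]
    rcases blockPos_lt_iff.mp hpq with hij | ⟨rfl, hac⟩
    · refine lt_of_not_ge fun hle => hij.not_ge ?_
      simpa only [hgb] using hb.monotone hle
    · exact (hg i).strictMono hac
  · intro p q
    obtain ⟨i, a, rfl⟩ := exists_eq_blockPos α p
    obtain ⟨j, c, rfl⟩ := exists_eq_blockPos α q
    simp only [f_blockPos]
    by_cases hij : i = j
    · subst hij
      rw [(hg i).lt_iff, (isOccurrence_blockPos σ α i).lt_iff]
    · rw [hb.lt_iff _ _ (by rwa [hgb, hgb]), (isBlockMap_inflate σ α).lt_iff _ _ (by simpa)]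
      simp only [hgb, blockIndex_blockPos]

theorem IsBlockMap.eq_inflate (hb : IsBlockMap π σ b) :
    (⟨n, π⟩ : SizedPerm) = ⟨_, inflate σ (block π b)⟩ := by
  choose g hg range_g using fun i => exists_isOccurrence_patternOn π (b ⁻¹' {i})
  have hgb (i a) : b (g i a) = i := (range_g i).subset ⟨a, rfl⟩
  obtain ⟨f, hf, f_blockPos⟩ := hb.exists_isOccurrence_inflate (α := block π b) hg hgb
  refine (IsOccurrence.refl π).sigma_eq_of_range_eq hf
    (Set.range_id.trans (Set.eq_univ_of_forall fun p => ?_).symm)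
  obtain ⟨a, ha⟩ := (range_g (b p)).superset rfl
  exact ⟨blockPos (block π b) (b p) a, (f_blockPos (b p) a).trans ha⟩

theorem Contains.inflate {β : Fin m → SizedPerm} (h : ∀ i, Contains (α i).2 (β i).2) :
    Contains (inflate σ α) (inflate σ β) := by
  choose f hf using fun i => contains_iff_exists_isOccurrence.mp (h i)
  obtain ⟨g, hg, -⟩ := (isBlockMap_inflate σ β).exists_isOccurrence_inflate
    (fun i => (isOccurrence_blockPos σ β i).comp (hf i))
    fun i a => blockIndex_blockPos β i (f i a)
  exact hg.contains

theorem contains_inflate_iff :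
    Contains τ (inflate σ α) ↔
      ∃ c, IsBlockMap τ σ c ∧ ∀ i, Contains (block τ c i).2 (α i).2 := by
  constructor
  · intro h
    obtain ⟨f, hf⟩ := contains_iff_exists_isOccurrence.mp h
    refine ⟨blockIndex α ∘ f, (isBlockMap_inflate σ α).comp hf, fun i => ?_⟩
    obtain ⟨g, hg, range_g⟩ := exists_isOccurrence_patternOn τ ((blockIndex α ∘ f) ⁻¹' {i})
    refine (hf.comp hg).contains_of_range_subset (isOccurrence_blockPos σ α i) ?_
    rintro _ ⟨a, rfl⟩
    rw [range_blockPos]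
    exact range_g.subset ⟨a, rfl⟩
  · rintro ⟨c, hc, hcα⟩
    have contains_blocks := Contains.inflate (σ := σ) hcα
    exact (congrArg (fun ρ : SizedPerm => Contains ρ.2 (inflate σ α)) hc.eq_inflate).mpr
      contains_blocks

theorem IsBlockMap.contains_of_surjective (hb : IsBlockMap π σ b) (hsurj : Function.Surjective b) :
    Contains σ π := by
  choose p hp using hsurj
  refine ⟨p, fun i j hij => ?_, fun i j => ?_⟩
  · refine lt_of_not_ge fun hle => hij.not_ge ?_
    simpa only [hp] using hb.monotone hle
  · rcases eq_or_ne i j with rfl | hij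
    · simp
    · rw [hb.lt_iff _ _ (by rwa [hp, hp]), hp, hp]

theorem block_length_pos (π : Perm n) (hsurj : Function.Surjective b) (i : Fin m) :
    0 < (block π b i).1 :=
  (Set.ncard_pos).mpr (hsurj i)

theorem block_length_lt (π : Perm n) (hm : 2 ≤ m) (hsurj : Function.Surjective b) (i : Fin m) :
    (block π b i).1 < n := by
  have := Fin.nontrivial_iff_two_le.mpr hm
  obtain ⟨j, hji⟩ := exists_ne i
  obtain ⟨p, rfl⟩ := hsurj j
  have proper : b ⁻¹' {i} ⊂ Set.univ :=
    Set.ssubset_univ_iff.mpr fun h => hji (h.superset (Set.mem_univ p))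
  simpa [block, patternOn] using Set.ncard_lt_ncard proper

end Inflations

section Modules

variable {n : ℕ} {π : Perm n} {I J : Set (Fin n)}

/-- A module of `π`: a set of positions whose elements compare in the same way, both by position
and by value, to every outside entry. These are the intervals of `π`, see
`isPermInterval_iff_isModule`. -/
def IsModule (π : Perm n) (I : Set (Fin n)) : Prop :=
  ∀ p ∉ I, ∀ q ∈ I, ∀ q' ∈ I, (p < q ↔ p < q') ∧ (π p < π q ↔ π p < π q')

theorem isRange_iff_forall_notMem {I : Finset (Fin n)} :
    IsRange I ↔ ∀ p ∉ I, ∀ q ∈ I, ∀ q' ∈ I, (p < q ↔ p < q') := by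
  constructor
  · intro h p hp q hq q' hq'
    constructor <;> intro hlt <;> by_contra! hle
    · exact hp (h hq' hq hle hlt.le)
    · exact hp (h hq hq' hle hlt.le)
  · intro h i j l hi hl hij hjl
    by_contra hj
    have hjl' : j < l := lt_of_le_of_ne hjl fun h => hj (h ▸ hl)
    exact ((h j hj i hi l hl).mpr hjl').not_ge hij

theorem isPermInterval_iff_isModule {I : Finset (Fin n)} :
    IsPermInterval π I ↔ IsModule π (I : Set (Fin n)) := by
  have values_iff : IsRange (I.image π) ↔
      ∀ p ∉ I, ∀ q ∈ I, ∀ q' ∈ I, (π p < π q ↔ π p < π q') := by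
    rw [isRange_iff_forall_notMem, ← π.forall_congr_right]
    simp
  rw [IsPermInterval, isRange_iff_forall_notMem, values_iff]
  exact ⟨fun h p hp q hq q' hq' => ⟨h.1 p hp q hq q' hq', h.2 p hp q hq q' hq'⟩,
    fun h => ⟨fun p hp q hq q' hq' => (h p hp q hq q' hq').1,
      fun p hp q hq q' hq' => (h p hp q hq q' hq').2⟩⟩

theorem isSimple_iff_isModule :
    IsSimple π ↔ ∀ I, IsModule π I → I.Subsingleton ∨ I = Set.univ := by
  have size_iff (I : Finset (Fin n)) : I.card ≤ 1 ∨ I.card = n ↔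
      (I : Set (Fin n)).Subsingleton ∨ (I : Set (Fin n)) = Set.univ := by
    rw [Finset.card_le_one_iff_subsingleton, Finset.coe_eq_univ, ← Finset.card_eq_iff_eq_univ,
      Fintype.card_fin]
  simp only [IsSimple, isPermInterval_iff_isModule, size_iff]
  exact ⟨fun h I hI => by lift I to Finset (Fin n) using I.toFinite; exact h I hI, fun h I => h I⟩

theorem isSimple_of_length_two (σ : Perm 2) : IsSimple σ := by
  intro I _
  have : I.card ≤ 2 := (Finset.card_le_univ I).trans_eq (Fintype.card_fin 2)
  omega

theorem isModule_singleton (π : Perm n) (p : Fin n) : IsModule π {p} := by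
  rintro _ - _ rfl _ rfl
  exact ⟨Iff.rfl, Iff.rfl⟩

theorem IsModule.lt_iff_lt (hI : IsModule π I) {p q q' : Fin n} (hp : p ∉ I) (hq : q ∈ I)
    (hq' : q' ∈ I) : π q < π p ↔ π q' < π p := by
  have hne {q : Fin n} (hq : q ∈ I) : π p ≠ π q := π.injective.ne fun h => hp (h ▸ hq)
  rw [← not_le, ← not_le, (hne hq).le_iff_lt, (hne hq').le_iff_lt, (hI p hp q hq q' hq').2]

theorem IsModule.sUnion {S : Set (Set (Fin n))} (hS : ∀ I ∈ S, IsModule π I) {x : Fin n}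
    (hx : ∀ I ∈ S, x ∈ I) : IsModule π (⋃₀ S) := by
  rintro p hp q ⟨I, hI, hq⟩ q' ⟨J, hJ, hq'⟩
  have via_x {K : Set (Fin n)} (hK : K ∈ S) {r : Fin n} (hr : r ∈ K) :=
    hS K hK p (fun h => hp ⟨K, hK, h⟩) r hr x (hx K hK)
  exact ⟨(via_x hI hq).1.trans (via_x hJ hq').1.symm, (via_x hI hq).2.trans (via_x hJ hq').2.symm⟩

theorem IsModule.union (hI : IsModule π I) (hJ : IsModule π J) {x : Fin n} (hxI : x ∈ I)
    (hxJ : x ∈ J) : IsModule π (I ∪ J) := by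
  rw [← Set.sUnion_pair]
  exact IsModule.sUnion (x := x) (by simp [hI, hJ]) (by simp [hxI, hxJ])

theorem IsModule.ordConnected (hI : IsModule π I) : I.OrdConnected := by
  refine ⟨fun i hi l hl j ⟨hij, hjl⟩ => ?_⟩
  by_contra hj
  have hjl' : j < l := lt_of_le_of_ne hjl fun h => hj (h ▸ hl)
  exact ((hI j hj i hi l hl).1.mpr hjl').not_ge hij

end Modules

section BlockMaps

variable {m n : ℕ} {π : Perm n} {σ : Perm m} {b : Fin n → Fin m}

theorem IsBlockMap.isModule_preimage (hb : IsBlockMap π σ b) {K : Set (Fin m)}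
    (hK : IsModule σ K) : IsModule π (b ⁻¹' K) := by
  intro p hp q hq q' hq'
  have hne {q : Fin n} (hq : q ∈ b ⁻¹' K) : b p ≠ b q := fun h => hp (h ▸ hq : b p ∈ K)
  have position_iff {q : Fin n} (hq : q ∈ b ⁻¹' K) : p < q ↔ b p < b q :=
    ⟨fun h => (hb.monotone h.le).lt_of_ne (hne hq), hb.monotone.reflect_lt⟩
  rw [position_iff hq, position_iff hq', hb.lt_iff p q (hne hq), hb.lt_iff p q' (hne hq')]
  exact hK (b p) hp (b q) hq (b q') hq'

theorem IsBlockMap.isModule_of_subset_image (hb : IsBlockMap π σ b) {I : Set (Fin n)}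
    (hI : IsModule π I) {K : Set (Fin m)} (hK : K ⊆ b '' I) (hKc : Kᶜ ⊆ b '' Iᶜ) :
    IsModule σ K := by
  intro i hi j hj j' hj'
  obtain ⟨p, hp, rfl⟩ := hKc hi
  obtain ⟨q, hq, rfl⟩ := hK hj
  obtain ⟨q', hq', rfl⟩ := hK hj'
  have hne {q : Fin n} (hq : b q ∈ K) : b p ≠ b q := fun h => hi (h ▸ hq)
  have position_iff {q : Fin n} (hq : b q ∈ K) : p < q ↔ b p < b q :=
    ⟨fun h => (hb.monotone h.le).lt_of_ne (hne hq), hb.monotone.reflect_lt⟩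
  rw [← position_iff hj, ← position_iff hj', ← hb.lt_iff p q (hne hj), ← hb.lt_iff p q' (hne hj')]
  exact hI p hp q hq q' hq'

theorem exists_isBlockMap (hmono : Monotone b) (hsurj : Function.Surjective b)
    (hmod : ∀ i, IsModule π (b ⁻¹' {i})) : ∃ σ : Perm m, IsBlockMap π σ b := by
  choose s hs using hsurj
  obtain ⟨σ, hσ⟩ := exists_perm_lt_iff
    (π.injective.comp (Function.LeftInverse.injective (f := s) hs))
  refine ⟨σ, hmono, fun p q hpq => ?_⟩
  have change_right : π p < π q ↔ π p < π (s (b q)) :=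
    (hmod (b q) p hpq q rfl (s (b q)) (hs _)).2
  have change_left : π p < π (s (b q)) ↔ π (s (b p)) < π (s (b q)) :=
    (hmod (b p)).lt_iff_lt (fun h => hpq ((hs _).symm.trans h).symm) rfl (hs _)
  exact change_right.trans (change_left.trans (hσ (b p) (b q)).symm)

theorem exists_monotone_surjective_fin {A : Type*} [LinearOrder A] {v : Fin n → A}
    (hv : Monotone v) : ∃ (m : ℕ) (b : Fin n → Fin m), Monotone b ∧ Function.Surjective b ∧
      ∀ p q, b p = b q ↔ v p = v q := by
  let e := (Finset.univ.image v).orderIsoOfFin rfl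
  have hmem (p : Fin n) : v p ∈ Finset.univ.image v :=
    Finset.mem_image_of_mem v (Finset.mem_univ p)
  refine ⟨_, fun p => e.symm ⟨v p, hmem p⟩, fun p q hpq => ?_, fun i => ?_, fun p q => by simp⟩
  · exact e.symm.monotone (hv hpq)
  · obtain ⟨p, -, hp⟩ := Finset.mem_image.mp (e i).2
    exact ⟨p, e.symm_apply_eq.mpr (Subtype.ext hp)⟩

theorem sigma_eq_of_monotone_surjective {m' : ℕ} {b' : Fin n → Fin m'} (hb : Monotone b)
    (hb' : Monotone b') (hsurj : Function.Surjective b) (hsurj' : Function.Surjective b')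
    (hker : ∀ p q, b p = b q ↔ b' p = b' q) :
    (⟨m, b⟩ : Σ m, Fin n → Fin m) = ⟨m', b'⟩ := by
  choose s hs using hsurj
  have strictMono : StrictMono (b' ∘ s) := fun i j hij => by
    have hlt : s i < s j := hb.reflect_lt (by simpa only [hs])
    exact (hb' hlt.le).lt_of_ne fun h => hij.ne (by rw [← hs i, ← hs j, hker, h])
  have b'_eq (p : Fin n) : b' p = (b' ∘ s) (b p) := (hker _ _).mp (hs (b p)).symm
  have surjective : Function.Surjective (b' ∘ s) := fun i => by
    obtain ⟨p, rfl⟩ := hsurj' i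
    exact ⟨b p, (b'_eq p).symm⟩
  obtain rfl : m = m' := by
    simpa using Fintype.card_of_bijective ⟨strictMono.injective, surjective⟩
  rw [funext b'_eq, strictMono.eq_id]
  rfl

end BlockMaps

section Cuts

variable {n : ℕ} {π : Perm n} {u v : Prop} {c d : Fin n}

/-- The entries of `π` at the positions before `c`, of which there is at least one, lie all below
(if `u` holds) or all above (if `u` fails) the entries at the positions from `c` on. Thus `π` is
the inflation of a permutation of length two, the second block starting at `c`. -/
structure IsCut (u : Prop) (π : Perm n) (c : Fin n) : Prop where
  nonempty_Iio : (Set.Iio c).Nonempty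
  lt_iff : ∀ i < c, ∀ j ≥ c, (π i < π j ↔ u)

/-- `π` is a direct sum (if `u` holds) or a skew sum (if `u` fails) of two nonempty
permutations. -/
def DecomposableBy (u : Prop) (π : Perm n) : Prop :=
  ∃ c, IsCut u π c

theorem IsCut.isModule_Iio (hc : IsCut u π c) : IsModule π (Set.Iio c) := by
  intro p hp q hq q' hq'
  have hcp : c ≤ p := not_lt.mp hp
  have value_iff {r : Fin n} (hr : r < c) : π p < π r ↔ ¬u := by
    rw [← hc.lt_iff r hr p hcp, not_lt, (π.injective.ne (hr.trans_le hcp).ne').le_iff_lt]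
  rw [value_iff hq, value_iff hq']
  exact ⟨iff_of_false (hq.trans_le hcp).not_gt (hq'.trans_le hcp).not_gt, Iff.rfl⟩

theorem IsCut.isModule_Ici (hc : IsCut u π c) : IsModule π (Set.Ici c) := by
  intro p hp q hq q' hq'
  have hpc : p < c := not_le.mp hp
  rw [hc.lt_iff p hpc q hq, hc.lt_iff p hpc q' hq']
  exact ⟨iff_of_true (hpc.trans_le hq) (hpc.trans_le hq'), Iff.rfl⟩

theorem IsCut.iff_of_isCut (hc : IsCut u π c) (hd : IsCut v π d) : u ↔ v := by
  obtain ⟨i, hi⟩ := hc.nonempty_Iio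
  obtain ⟨j, hj⟩ := hd.nonempty_Iio
  rw [← hc.lt_iff (min i j) (min_lt_of_left_lt hi) (max c d) (le_max_left c d),
    hd.lt_iff (min i j) (min_lt_of_right_lt hj) (max c d) (le_max_right c d)]

theorem exists_isCut_of_separated {I : Set (Fin n)} (hI : I.Nonempty) (hIc : Iᶜ.Nonempty)
    (hlt : ∀ i ∈ I, ∀ j ∉ I, i < j) (hu : ∀ i ∈ I, ∀ j ∉ I, (π i < π j ↔ u)) :
    ∃ c, IsCut u π c ∧ Set.Iio c = I := by
  obtain ⟨c, hcI, hc_le⟩ := Set.exists_min_image Iᶜ id (Set.toFinite _) hIc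
  have Iio_eq : Set.Iio c = I := by
    ext i
    exact ⟨fun hi => by_contra fun h => (hc_le i h).not_gt hi, fun hi => hlt i hi c hcI⟩
  refine ⟨c, ⟨Iio_eq ▸ hI, fun i hi j hj => hu i (Iio_eq.subset hi) j fun hjI => ?_⟩, Iio_eq⟩
  exact (Iio_eq.superset hjI).not_ge hj

theorem decomposableBy_of_union_eq_univ {I J : Set (Fin n)} (hI : IsModule π I)
    (hJ : IsModule π J) (hI_ne : I ≠ Set.univ) (hJ_ne : J ≠ Set.univ) (hIJ : I ∪ J = Set.univ) :
    ∃ u, DecomposableBy u π := by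
  obtain ⟨x, hx⟩ := (Set.ne_univ_iff_exists_notMem J).mp hJ_ne
  obtain ⟨y, hy⟩ := (Set.ne_univ_iff_exists_notMem I).mp hI_ne
  have mem_of_notMem {z : Fin n} (hz : z ∉ I) : z ∈ J :=
    (hIJ.superset (Set.mem_univ z)).resolve_left hz
  have hxI : x ∈ I := (hIJ.superset (Set.mem_univ x)).resolve_right hx
  wlog hxy : x < y generalizing I J x y
  · refine this hJ hI hJ_ne hI_ne (Set.union_comm J I ▸ hIJ) y hy x hx
      (fun hz => (hIJ.superset (Set.mem_univ _)).resolve_right hz) (mem_of_notMem hy) ?_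
    exact lt_of_le_of_ne (not_lt.mp hxy) fun h => hx (h ▸ mem_of_notMem hy)
  have positions (i) (hi : i ∈ I) (j) (hj : j ∉ I) : i < j := by
    have hxj : x < j := (hJ x hx y (mem_of_notMem hy) j (mem_of_notMem hj)).1.mp hxy
    by_contra! hle
    have hji : j < i := lt_of_le_of_ne hle fun h => hj (h ▸ hi)
    exact ((hI j hj i hi x hxI).1.mp hji).not_gt hxj
  have values (i) (hi : i ∈ I) (j) (hj : j ∉ I) : π i < π j ↔ π x < π y :=
    (hI.lt_iff_lt hj hi hxI).trans (hJ x hx j (mem_of_notMem hj) y (mem_of_notMem hy)).2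
  obtain ⟨c, hc, -⟩ := exists_isCut_of_separated ⟨x, hxI⟩ ⟨y, hy⟩ positions values
  exact ⟨_, c, hc⟩

theorem decomposableBy_patternOn_Iio (hc : IsCut u π c) :
    DecomposableBy u (patternOn π (Set.Iio c)).2 ↔ ∃ d < c, IsCut u π d := by
  obtain ⟨f, hf, range_f⟩ := exists_isOccurrence_patternOn π (Set.Iio c)
  have f_lt (k) : f k < c := range_f.subset ⟨k, rfl⟩
  have exists_eq_f {i : Fin n} (hi : i < c) : ∃ k, f k = i := range_f.superset hi
  constructor
  · rintro ⟨e, ⟨k, hk⟩, he⟩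
    refine ⟨f e, f_lt e, ⟨f k, hf.strictMono hk⟩, fun i hi j hj => ?_⟩
    obtain ⟨i, rfl⟩ := exists_eq_f (hi.trans (f_lt e))
    rcases lt_or_ge j c with hjc | hcj
    · obtain ⟨j, rfl⟩ := exists_eq_f hjc
      rw [hf.lt_iff]
      exact he i (hf.strictMono.lt_iff_lt.mp hi) j (hf.strictMono.le_iff_le.mp hj)
    · exact hc.lt_iff _ (f_lt i) j hcj
  · rintro ⟨d, hdc, ⟨i, hi⟩, hd⟩
    obtain ⟨e, rfl⟩ := exists_eq_f hdc
    obtain ⟨k, rfl⟩ := exists_eq_f (lt_trans hi hdc)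
    refine ⟨e, ⟨k, hf.strictMono.lt_iff_lt.mp hi⟩, fun i hi j hj => ?_⟩
    rw [← hf.lt_iff]
    exact hd _ (hf.strictMono hi) _ (hf.strictMono.monotone hj)

end Cuts

section Linked

variable {n : ℕ} {π : Perm n} {p q r : Fin n}

/-- The positions `p` and `q` lie in a common proper module of `π`. -/
def Linked (π : Perm n) (p q : Fin n) : Prop :=
  ∃ I, IsModule π I ∧ I ≠ Set.univ ∧ p ∈ I ∧ q ∈ I

theorem Linked.symm (h : Linked π p q) : Linked π q p := by
  obtain ⟨I, hI, hne, hp, hq⟩ := h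
  exact ⟨I, hI, hne, hq, hp⟩

theorem Linked.refl (hn : 2 ≤ n) (π : Perm n) (p : Fin n) : Linked π p p := by
  have := Fin.nontrivial_iff_two_le.mpr hn
  exact ⟨{p}, isModule_singleton π p, Set.singleton_ne_univ p, rfl, rfl⟩

theorem Linked.trans (hπ : ∀ u, ¬DecomposableBy u π) (h : Linked π p q) (h' : Linked π q r) :
    Linked π p r := by
  obtain ⟨I, hI, hI_ne, hp, hq⟩ := h
  obtain ⟨J, hJ, hJ_ne, hqJ, hr⟩ := h'
  refine ⟨I ∪ J, hI.union hJ hq hqJ, fun hIJ => ?_, Or.inl hp, Or.inr hr⟩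
  obtain ⟨u, hu⟩ := decomposableBy_of_union_eq_univ hI hJ hI_ne hJ_ne hIJ
  exact hπ u hu

theorem isModule_setOf_linked (π : Perm n) (p : Fin n) : IsModule π {q | Linked π p q} := by
  have eq_sUnion : {q | Linked π p q} = ⋃₀ {I | IsModule π I ∧ I ≠ Set.univ ∧ p ∈ I} := by
    ext q
    simp [Linked, and_assoc]
  rw [eq_sUnion]
  exact IsModule.sUnion (fun I hI => hI.1) fun I hI => hI.2.2

theorem exists_not_linked [NeZero n] (π : Perm n) : ∃ p q, ¬Linked π p q := by
  refine ⟨0, ⊤, ?_⟩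
  rintro ⟨I, hI, hne, h0, htop⟩
  exact hne (Set.eq_univ_of_forall fun p =>
    hI.ordConnected.out h0 htop ⟨Fin.zero_le p, le_top⟩)

end Linked

section SubstitutionDecomposition

variable {m n : ℕ} {π : Perm n} {σ : Perm m} {b : Fin n → Fin m} {u : Prop} {c : Fin n}

/-- Via the block map `b`, the permutation `π` is an inflation, with nonempty blocks, of the
simple permutation `σ` of length at least two. -/
structure IsSubstDecomposition (π : Perm n) (σ : Perm m) (b : Fin n → Fin m) : Prop
    extends IsBlockMap π σ b where
  surjective : Function.Surjective b
  two_le : 2 ≤ m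
  isSimple : IsSimple σ

/-- If `σ` has length two, then the first block is not itself a sum of the same kind. This is the
normalization making substitution decompositions unique. -/
def HeadIndecomposable (σ : Perm m) (α : Fin m → SizedPerm) : Prop :=
  m = 2 → ∀ i : Fin m, (i : ℕ) = 0 → ¬DecomposableBy (StrictMono σ) (α i).2

/-- The inflation of `σ` by `α` is a substitution decomposition in normal form. -/
structure IsReducedInflation (σ : Perm m) (α : Fin m → SizedPerm) : Prop where
  isSimple : IsSimple σ
  two_le : 2 ≤ m
  length_pos : ∀ i, 0 < (α i).1
  headIndecomposable : HeadIndecomposable σ α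

theorem isSubstDecomposition_inflate (hσ : IsSimple σ) (hm : 2 ≤ m) {α : Fin m → SizedPerm}
    (hα : ∀ i, 0 < (α i).1) : IsSubstDecomposition (inflate σ α) σ (blockIndex α) :=
  ⟨isBlockMap_inflate σ α, blockIndex_surjective hα, hm, hσ⟩

theorem strictMono_perm_two_iff {σ : Perm 2} : StrictMono σ ↔ σ 0 < σ 1 := by
  rw [Fin.strictMono_iff_lt_succ]
  exact Fin.forall_fin_one

theorem IsSubstDecomposition.exists_isCut {σ : Perm 2} {b : Fin n → Fin 2}
    (h : IsSubstDecomposition π σ b) : ∃ c, IsCut (StrictMono σ) π c ∧ Set.Iio c = b ⁻¹' {0} := by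
  obtain ⟨p, hp⟩ := h.surjective 0
  obtain ⟨q, hq⟩ := h.surjective 1
  have eq_one {j : Fin n} (hj : j ∉ b ⁻¹' {0}) : b j = 1 := Fin.eq_one_of_ne_zero _ hj
  refine exists_isCut_of_separated ⟨p, hp⟩ ⟨q, by simp [hq]⟩ (fun i hi j hj => ?_)
    fun i (hi : b i = 0) j hj => ?_
  · exact h.monotone.reflect_lt (by rw [show b i = 0 from hi, eq_one hj]; exact Fin.zero_lt_one)
  · rw [h.lt_iff i j (by simp [hi, eq_one hj]), hi, eq_one hj, strictMono_perm_two_iff]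

theorem IsCut.exists_isSubstDecomposition (hc : IsCut u π c) : ∃ (σ : Perm 2) (b : Fin n → Fin 2),
    IsSubstDecomposition π σ b ∧ (StrictMono σ ↔ u) ∧ b ⁻¹' {0} = Set.Iio c := by
  let b : Fin n → Fin 2 := fun p => if p < c then 0 else 1
  have preimage_zero : b ⁻¹' {0} = Set.Iio c := by ext p; simp [b]
  have preimage_one : b ⁻¹' {1} = Set.Ici c := by ext p; simp [b]
  have monotone : Monotone b := fun p q hpq => by
    by_cases hp : p < c
    · simp [b, hp]
    · simp [b, hp, (not_lt.mp hp).trans hpq |>.not_gt]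
  have surjective : Function.Surjective b := by
    obtain ⟨p, hp⟩ := hc.nonempty_Iio
    exact Fin.forall_fin_two.mpr ⟨⟨p, preimage_zero.superset hp⟩,
      ⟨c, preimage_one.superset Set.self_mem_Ici⟩⟩
  obtain ⟨σ, hσ⟩ := exists_isBlockMap (π := π) monotone surjective
    (Fin.forall_fin_two.mpr ⟨preimage_zero ▸ hc.isModule_Iio, preimage_one ▸ hc.isModule_Ici⟩)
  have h : IsSubstDecomposition π σ b := ⟨hσ, surjective, le_rfl, isSimple_of_length_two σ⟩
  obtain ⟨d, hd, -⟩ := h.exists_isCut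
  exact ⟨σ, b, h, hd.iff_of_isCut hc, preimage_zero⟩

theorem IsSimple.length_eq_two_of_isModule_pair (hσ : IsSimple σ) {i j : Fin m} (hij : i ≠ j)
    (h : IsModule σ {i, j}) : m = 2 := by
  have pair_eq_univ : {i, j} = Set.univ := (isSimple_iff_isModule.mp hσ _ h).resolve_left
    (Set.not_subsingleton_iff.mpr (Set.nontrivial_pair hij))
  rw [← Set.ncard_pair hij, pair_eq_univ, Set.ncard_univ, Nat.card_fin]

theorem IsSubstDecomposition.eq_univ_of_isModule (h : IsSubstDecomposition π σ b) (hm : m ≠ 2)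
    {I : Set (Fin n)} (hI : IsModule π I) {p q : Fin n} (hp : p ∈ I) (hq : q ∈ I)
    (hpq : b p ≠ b q) : I = Set.univ := by
  have subsingleton_or_univ := isSimple_iff_isModule.mp h.isSimple
  have image_eq_univ : b '' I = Set.univ := by
    have isModule_image : IsModule σ (b '' I) :=
      h.isModule_of_subset_image hI subset_rfl (Set.subset_image_compl h.surjective)
    exact (subsingleton_or_univ _ isModule_image).resolve_left
      fun hsub => hpq (hsub ⟨p, hp, rfl⟩ ⟨q, hq, rfl⟩)
  have isModule_of_superset {K : Set (Fin m)} (hK : (b '' Iᶜ)ᶜ ⊆ K) : IsModule σ K :=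
    h.isModule_of_subset_image hI (image_eq_univ ▸ Set.subset_univ K) (Set.compl_subset_comm.mp hK)
  by_contra hne
  obtain ⟨r, hr⟩ := (Set.ne_univ_iff_exists_notMem I).mp hne
  have subsingleton : (b '' Iᶜ)ᶜ.Subsingleton := (subsingleton_or_univ _
    (isModule_of_superset subset_rfl)).resolve_right fun huniv =>
      huniv.superset (Set.mem_univ (b r)) ⟨r, hr, rfl⟩
  obtain ⟨i, hi⟩ : ∃ i, (b '' Iᶜ)ᶜ ⊆ {i} := by
    rcases subsingleton.eq_empty_or_singleton with empty | ⟨i, singleton⟩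
    · exact ⟨b r, empty ▸ Set.empty_subset _⟩
    · exact ⟨i, singleton.subset⟩
  have := Fin.nontrivial_iff_two_le.mpr h.two_le
  obtain ⟨j, hj⟩ := exists_ne i
  exact hm (h.isSimple.length_eq_two_of_isModule_pair hj
    (isModule_of_superset (hi.trans (Set.subset_insert j {i}))))

theorem IsSubstDecomposition.linked_iff (h : IsSubstDecomposition π σ b) (hm : m ≠ 2)
    {p q : Fin n} : Linked π p q ↔ b p = b q := by
  constructor
  · rintro ⟨I, hI, hne, hp, hq⟩
    exact by_contra fun hpq => hne (h.eq_univ_of_isModule hm hI hp hq hpq)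
  · intro hpq
    have := Fin.nontrivial_iff_two_le.mpr h.two_le
    refine ⟨b ⁻¹' {b q}, h.isModule_preimage (isModule_singleton σ _), fun huniv => ?_, hpq, rfl⟩
    obtain ⟨i, hi⟩ := exists_ne (b q)
    obtain ⟨r, rfl⟩ := h.surjective i
    exact hi (huniv.superset (Set.mem_univ r))

theorem IsSubstDecomposition.decomposableBy_iff (h : IsSubstDecomposition π σ b) :
    DecomposableBy u π ↔ m = 2 ∧ (StrictMono σ ↔ u) := by
  constructor
  · rintro ⟨c, hc⟩
    obtain rfl : m = 2 := by
      by_contra hm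
      obtain ⟨r, hr⟩ := hc.nonempty_Iio
      have eq_or_eq (p : Fin n) : b p = b r ∨ b p = b c := by
        rcases lt_or_ge p c with hp | hp
        · refine Or.inl ((h.linked_iff hm).mp ⟨_, hc.isModule_Iio, fun huniv => ?_, hp, hr⟩)
          exact lt_irrefl c (huniv.superset (Set.mem_univ c))
        · refine Or.inr ((h.linked_iff hm).mp ⟨_, hc.isModule_Ici, fun huniv => ?_, hp, le_refl c⟩)
          exact (Set.mem_Ici.mp (huniv.superset (Set.mem_univ r))).not_gt (Set.mem_Iio.mp hr)
      have univ_subset : Set.univ ⊆ ({b r, b c} : Set (Fin m)) := fun i _ => by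
        obtain ⟨p, rfl⟩ := h.surjective i
        exact eq_or_eq p
      have card_le := (Set.ncard_le_ncard univ_subset).trans (Set.ncard_insert_le (b r) {b c})
      rw [Set.ncard_univ, Nat.card_fin, Set.ncard_singleton] at card_le
      exact hm (card_le.antisymm h.two_le)
    obtain ⟨d, hd, -⟩ := h.exists_isCut
    exact ⟨rfl, hd.iff_of_isCut hc⟩
  · rintro ⟨rfl, hu⟩
    obtain ⟨c, hc, -⟩ := h.exists_isCut
    exact ⟨c, propext hu ▸ hc⟩

theorem exists_headIndecomposable_of_decomposableBy (hπ : DecomposableBy u π) :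
    ∃ (σ : Perm 2) (b : Fin n → Fin 2),
      IsSubstDecomposition π σ b ∧ HeadIndecomposable σ (block π b) := by
  obtain ⟨c, hc, c_minimal⟩ := Set.exists_min_image {c | IsCut u π c} id (Set.toFinite _) hπ
  obtain ⟨σ, b, h, hσ, hbc⟩ := hc.exists_isSubstDecomposition
  refine ⟨σ, b, h, fun _ i hi => ?_⟩
  obtain rfl : i = 0 := Fin.ext hi
  rw [block, hbc, propext hσ, decomposableBy_patternOn_Iio hc]
  rintro ⟨d, hdc, hd⟩
  exact (c_minimal d hd).not_gt hdc

theorem exists_monotone_surjective_linked (hn : 2 ≤ n) (hπ : ∀ u, ¬DecomposableBy u π) :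
    ∃ (m : ℕ) (b : Fin n → Fin m), Monotone b ∧ Function.Surjective b ∧
      ∀ p q, b p = b q ↔ Linked π p q := by
  have : NeZero n := ⟨by omega⟩
  have exists_isLeast (p : Fin n) : ∃ v, IsLeast {q | Linked π p q} v :=
    Set.exists_min_image _ id (Set.toFinite _) ⟨p, Linked.refl hn π p⟩
  choose v hv using exists_isLeast
  have v_eq_iff (p q : Fin n) : v p = v q ↔ Linked π p q := by
    refine ⟨fun h => (hv p).1.trans hπ (h ▸ (hv q).1.symm), fun h => ?_⟩
    have classes_eq : {r | Linked π p r} = {r | Linked π q r} := by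
      ext r
      exact ⟨h.symm.trans hπ, h.trans hπ⟩
    exact (classes_eq ▸ hv p).unique (hv q)
  have monotone : Monotone v := fun p q hpq => by
    by_contra! hlt
    have hvp : v p ≤ p := (hv p).2 (Linked.refl hn π p)
    have linked_qp : Linked π q p := (isModule_setOf_linked π q).ordConnected.out (hv q).1
      (Linked.refl hn π q) ⟨hlt.le.trans hvp, hpq⟩
    exact hlt.ne ((v_eq_iff q p).mpr linked_qp)
  obtain ⟨m, b, hb, hsurj, hker⟩ := exists_monotone_surjective_fin monotone
  exact ⟨m, b, hb, hsurj, fun p q => (hker p q).trans (v_eq_iff p q)⟩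

theorem exists_isSubstDecomposition_of_not_decomposableBy (hn : 2 ≤ n)
    (hπ : ∀ u, ¬DecomposableBy u π) :
    ∃ (m : ℕ) (σ : Perm m) (b : Fin n → Fin m), IsSubstDecomposition π σ b := by
  have : NeZero n := ⟨by omega⟩
  obtain ⟨m, b, monotone, surjective, ker_eq⟩ := exists_monotone_surjective_linked hn hπ
  have fiber_eq (p : Fin n) : b ⁻¹' {b p} = {q | Linked π p q} := by
    ext q
    exact eq_comm.trans (ker_eq p q)
  obtain ⟨σ, hσ⟩ := exists_isBlockMap monotone surjective
    (surjective.forall.mpr fun p => fiber_eq p ▸ isModule_setOf_linked π p)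
  obtain ⟨p, q, hpq⟩ := exists_not_linked π
  refine ⟨m, σ, b, hσ, surjective, ?_, isSimple_iff_isModule.mpr fun K hK => ?_⟩
  · exact Fin.nontrivial_iff_two_le.mp ⟨b p, b q, mt (ker_eq p q).mp hpq⟩
  · refine or_iff_not_imp_right.mpr fun hK_ne i hi j hj => ?_
    obtain ⟨p, rfl⟩ := surjective i
    obtain ⟨q, rfl⟩ := surjective j
    refine (ker_eq p q).mpr ⟨b ⁻¹' K, hσ.isModule_preimage hK, fun huniv => hK_ne ?_, hi, hj⟩
    rw [← surjective.image_preimage K, huniv, Set.image_univ, surjective.range_eq]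

theorem exists_headIndecomposable (hn : 2 ≤ n) (π : Perm n) :
    ∃ (m : ℕ) (σ : Perm m) (b : Fin n → Fin m),
      IsSubstDecomposition π σ b ∧ HeadIndecomposable σ (block π b) := by
  by_cases hπ : ∃ u, DecomposableBy u π
  · obtain ⟨u, hu⟩ := hπ
    exact ⟨2, exists_headIndecomposable_of_decomposableBy hu⟩
  · push Not at hπ
    obtain ⟨m, σ, b, h⟩ := exists_isSubstDecomposition_of_not_decomposableBy hn hπ
    refine ⟨m, σ, b, h, fun hm => absurd (h.decomposableBy_iff.mpr ⟨hm, Iff.rfl⟩) (hπ _)⟩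

theorem IsSubstDecomposition.isLeast_isCut {σ : Perm 2} {b : Fin n → Fin 2}
    (h : IsSubstDecomposition π σ b) (hred : HeadIndecomposable σ (block π b)) :
    ∃ c, IsLeast {c | ∃ u, IsCut u π c} c ∧ b ⁻¹' {0} = Set.Iio c := by
  obtain ⟨c, hc, hbc⟩ := h.exists_isCut
  refine ⟨c, ⟨⟨_, hc⟩, fun d ⟨u, hd⟩ => ?_⟩, hbc.symm⟩
  by_contra! hdc
  have not_decomposable := hred rfl 0 rfl
  rw [block, ← hbc, decomposableBy_patternOn_Iio hc] at not_decomposable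
  exact not_decomposable ⟨d, hdc, propext (hd.iff_of_isCut hc) ▸ hd⟩

theorem IsSubstDecomposition.length_two_iff (h : IsSubstDecomposition π σ b) :
    m = 2 ↔ ∃ u, DecomposableBy u π :=
  ⟨fun hm => ⟨_, h.decomposableBy_iff.mpr ⟨hm, Iff.rfl⟩⟩,
    fun ⟨_, hu⟩ => (h.decomposableBy_iff.mp hu).1⟩

theorem IsSubstDecomposition.ker_eq {m' : ℕ} {σ' : Perm m'} {b' : Fin n → Fin m'}
    (h : IsSubstDecomposition π σ b) (h' : IsSubstDecomposition π σ' b')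
    (hred : HeadIndecomposable σ (block π b)) (hred' : HeadIndecomposable σ' (block π b'))
    (p q : Fin n) : b p = b q ↔ b' p = b' q := by
  have length_two_iff : m = 2 ↔ m' = 2 := h.length_two_iff.trans h'.length_two_iff.symm
  by_cases hm : m = 2
  · obtain rfl := hm
    obtain rfl := length_two_iff.mp rfl
    obtain ⟨c, hc, hbc⟩ := h.isLeast_isCut hred
    obtain ⟨c', hc', hbc'⟩ := h'.isLeast_isCut hred'
    obtain rfl := hc.unique hc'
    have eq_zero_iff (p : Fin n) : b p = 0 ↔ b' p = 0 :=
      Set.ext_iff.mp (hbc.trans hbc'.symm) p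
    have eq_iff {i j : Fin 2} : i = j ↔ (i = 0 ↔ j = 0) := by omega
    rw [eq_iff, eq_zero_iff, eq_zero_iff, ← eq_iff]
  · rw [← h.linked_iff hm, h'.linked_iff (mt length_two_iff.mpr hm)]

theorem IsSubstDecomposition.skeleton_eq {σ σ' : Perm m} (h : IsSubstDecomposition π σ b)
    (h' : IsSubstDecomposition π σ' b) : σ = σ' := by
  refine perm_eq_of_lt_iff fun i j => ?_
  obtain ⟨p, rfl⟩ := h.surjective i
  obtain ⟨q, rfl⟩ := h.surjective j
  by_cases hpq : b p = b q
  · simp [hpq]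
  · rw [← h.lt_iff p q hpq, h'.lt_iff p q hpq]

theorem IsSubstDecomposition.sigma_eq {m' : ℕ} {σ' : Perm m'} {b' : Fin n → Fin m'}
    (h : IsSubstDecomposition π σ b) (h' : IsSubstDecomposition π σ' b')
    (hred : HeadIndecomposable σ (block π b)) (hred' : HeadIndecomposable σ' (block π b')) :
    (⟨⟨m, σ⟩, block π b⟩ : Σ s : SizedPerm, Fin s.1 → SizedPerm) = ⟨⟨m', σ'⟩, block π b'⟩ := by
  cases sigma_eq_of_monotone_surjective h.monotone h'.monotone h.surjective h'.surjective
    (h.ker_eq h' hred hred')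
  rw [h.skeleton_eq h']

theorem exists_isSubstDecomposition_of_eq_inflate {α : Fin m → SizedPerm}
    (h : (⟨n, π⟩ : SizedPerm) = ⟨_, inflate σ α⟩) (hα : IsReducedInflation σ α) :
    ∃ b, IsSubstDecomposition π σ b ∧ block π b = α := by
  cases h
  exact ⟨_, isSubstDecomposition_inflate hα.isSimple hα.two_le hα.length_pos,
    funext (block_inflate σ)⟩

theorem IsReducedInflation.sigma_eq {s t : SizedPerm} {α : Fin s.1 → SizedPerm}
    {β : Fin t.1 → SizedPerm} (hα : IsReducedInflation s.2 α) (hβ : IsReducedInflation t.2 β)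
    (h : (⟨_, inflate s.2 α⟩ : SizedPerm) = ⟨_, inflate t.2 β⟩) :
    (⟨s, α⟩ : Σ s : SizedPerm, Fin s.1 → SizedPerm) = ⟨t, β⟩ := by
  generalize hπ : (⟨_, inflate s.2 α⟩ : SizedPerm) = π at h
  obtain ⟨n, π⟩ := π
  obtain ⟨b, hb, rfl⟩ := exists_isSubstDecomposition_of_eq_inflate hπ.symm hα
  obtain ⟨c, hc, rfl⟩ := exists_isSubstDecomposition_of_eq_inflate h hβ
  exact hb.sigma_eq hc hα.headIndecomposable hβ.headIndecomposable

theorem IsReducedInflation.length_lt {α : Fin m → SizedPerm} (hα : IsReducedInflation σ α)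
    (i : Fin m) : (α i).1 < ∑ i, (α i).1 :=
  (congrArg Sigma.fst (block_inflate σ i)).symm.trans_lt
    (block_length_lt (inflate σ α) hα.two_le (blockIndex_surjective hα.length_pos) i)

theorem exists_eq_inflate (hn : 2 ≤ n) (π : Perm n) :
    ∃ (s : SizedPerm) (α : Fin s.1 → SizedPerm), IsReducedInflation s.2 α ∧
      (⟨n, π⟩ : SizedPerm) = ⟨_, inflate s.2 α⟩ ∧ Contains s.2 π ∧
      ∀ i, (α i).1 < n ∧ Contains (α i).2 π := by
  obtain ⟨m, σ, b, h, hred⟩ := exists_headIndecomposable hn π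
  exact ⟨⟨m, σ⟩, block π b,
    ⟨h.isSimple, h.two_le, block_length_pos π h.surjective, hred⟩, h.eq_inflate,
    h.contains_of_surjective h.surjective,
    fun i => ⟨block_length_lt π h.two_le h.surjective i, contains_patternOn π _⟩⟩

theorem decomposableBy_inflate_iff (hσ : IsSimple σ) (hm : 2 ≤ m) {α : Fin m → SizedPerm}
    (hα : ∀ i, 0 < (α i).1) :
    DecomposableBy u (inflate σ α) ↔ m = 2 ∧ (StrictMono σ ↔ u) :=
  (isSubstDecomposition_inflate hσ hm hα).decomposableBy_iff

end SubstitutionDecomposition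

section WellQuasiOrder

variable {A : Type*} {r : A → A → Prop} {rk : A → ℕ} {s : Set A}

open Set.PartiallyWellOrderedOn in
theorem partiallyWellOrderedOn_below_minBadSeq [IsTrans A r] {f : ℕ → A} (hf : IsBadSeq r s f)
    (hmin : ∀ n, IsMinBadSeq r rk s n f) :
    {x ∈ s | ∃ n, r x (f n) ∧ rk x < rk (f n)}.PartiallyWellOrderedOn r := by
  rw [iff_forall_not_isBadSeq]
  rintro g ⟨hg, g_bad⟩
  choose hgs k hgk hrk using hg
  obtain ⟨i₀, hi₀⟩ : ∃ i₀, ∀ i, k i₀ ≤ k i := by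
    obtain ⟨i₀, h⟩ := Nat.sInf_mem (Set.range_nonempty k)
    exact ⟨i₀, fun i => h ▸ Nat.sInf_le (Set.mem_range_self i)⟩
  -- Minimality at `k i₀` is violated by `f 0, …, f (k i₀ - 1), g i₀, g (i₀ + 1), …`.
  let spliced : ℕ → A := fun n => if n < k i₀ then f n else g (i₀ + (n - k i₀))
  have spliced_of_lt {n : ℕ} (hn : n < k i₀) : spliced n = f n := if_pos hn
  have spliced_of_ge {n : ℕ} (hn : k i₀ ≤ n) : spliced n = g (i₀ + (n - k i₀)) :=
    if_neg hn.not_gt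
  have rk_lt : rk (spliced (k i₀)) < rk (f (k i₀)) := by
    rw [spliced_of_ge le_rfl, Nat.sub_self, add_zero]
    exact hrk i₀
  refine hmin (k i₀) spliced (fun n hn => (spliced_of_lt hn).symm) rk_lt
    ⟨fun n => ?_, fun n n' hnn' => ?_⟩
  · rcases lt_or_ge n (k i₀) with hn | hn
    · exact spliced_of_lt hn ▸ hf.1 n
    · exact spliced_of_ge hn ▸ hgs _
  · rcases lt_or_ge n (k i₀) with hn | hn <;> rcases lt_or_ge n' (k i₀) with hn' | hn'
    · rw [spliced_of_lt hn, spliced_of_lt hn']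
      exact hf.2 n n' hnn'
    · rw [spliced_of_lt hn, spliced_of_ge hn']
      exact fun h => hf.2 n _ (hn.trans_le (hi₀ _)) (_root_.trans h (hgk _))
    · omega
    · rw [spliced_of_ge hn, spliced_of_ge hn']
      exact g_bad _ _ (by omega)

-- Nash-Williams' argument: each term of a minimal bad sequence is obtained by an operation from
-- terms below the sequence, which form a well quasi order.
theorem partiallyWellOrderedOn_of_operations [IsPreorder A r] {ι : Type*} [Finite ι] {k : ι → ℕ}
    {op : ∀ i, (Fin (k i) → A) → A}
    (hop : ∀ i α β, (∀ j, r (α j) (β j)) → r (op i α) (op i β)) {base : Set A}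
    (hbase : base.PartiallyWellOrderedOn r)
    (hs : ∀ x ∈ s, x ∈ base ∨
      ∃ i α, (∀ j, α j ∈ s ∧ r (α j) x ∧ rk (α j) < rk x) ∧ x = op i α) :
    s.PartiallyWellOrderedOn r := by
  rw [Set.PartiallyWellOrderedOn.iff_not_exists_isMinBadSeq rk]
  rintro ⟨f, hf, hmin⟩
  set below := {x ∈ s | ∃ n, r x (f n) ∧ rk x < rk (f n)}
  have hbelow : below.PartiallyWellOrderedOn r := partiallyWellOrderedOn_below_minBadSeq hf hmin
  have image_pwo (i : ι) : (op i '' Set.univ.pi fun _ => below).PartiallyWellOrderedOn r :=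
    (Set.PartiallyWellOrderedOn.pi fun _ => hbelow).image_of_monotone_on
      fun α _ β _ hαβ => hop i α β hαβ
  have union_pwo : (base ∪ ⋃ i, op i '' Set.univ.pi fun _ => below).PartiallyWellOrderedOn r := by
    have := Fintype.ofFinite ι
    refine hbase.union ?_
    simpa using (Finset.partiallyWellOrderedOn_bUnion Finset.univ).mpr fun i _ => image_pwo i
  obtain ⟨m, n, hmn, h⟩ := union_pwo.exists_lt (f := f) fun n => by
    refine (hs (f n) (hf.1 n)).imp_right ?_
    rintro ⟨i, α, hα, hfn⟩
    exact Set.mem_iUnion.mpr ⟨i, α, fun j _ => ⟨(hα j).1, n, (hα j).2⟩, hfn.symm⟩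
  exact hf.2 m n hmn h

end WellQuasiOrder

section InflationClosure

variable {S : Set SizedPerm}

/-- The permutations obtained from the permutation of length one by repeatedly inflating members
of `S`. Only inflations in normal form are used, which makes the construction of each permutation
unique. -/
inductive InflationClosure (S : Set SizedPerm) : SizedPerm → Prop
  | one (π : Perm 1) : InflationClosure S ⟨1, π⟩
  | inflate {s : SizedPerm} (hs : s ∈ S) {α : Fin s.1 → SizedPerm}
      (hα : IsReducedInflation s.2 α) (h : ∀ i, InflationClosure S (α i)) :
      InflationClosure S ⟨_, inflate s.2 α⟩

theorem inflationClosure_of_mem {C : ∀ n, Set (Perm n)} (hC : IsPermClass C) {n : ℕ} (hn : 0 < n)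
    {π : Perm n} (hπ : π ∈ C n) :
    InflationClosure {s | 2 ≤ s.1 ∧ s.2 ∈ C s.1 ∧ IsSimple s.2} ⟨n, π⟩ := by
  induction n using Nat.strong_induction_on with
  | _ n ih =>
    rcases Nat.lt_or_ge n 2 with h_lt | h_ge
    · obtain rfl : n = 1 := by omega
      exact .one π
    · obtain ⟨s, α, hα, hπα, hs, hblock⟩ := exists_eq_inflate h_ge π
      rw [hπα]
      have mem_simples : s ∈ {s : SizedPerm | 2 ≤ s.1 ∧ s.2 ∈ C s.1 ∧ IsSimple s.2} :=
        ⟨hα.two_le, hC _ _ hπ hs, hα.isSimple⟩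
      exact .inflate mem_simples hα fun i =>
        ih _ (hblock i).1 (hα.length_pos i) (hC _ _ hπ (hblock i).2)

/-- Containment as a relation between permutations of unspecified lengths. -/
def SizedContains (σ π : SizedPerm) : Prop :=
  Contains σ.2 π.2

instance : IsPreorder SizedPerm SizedContains where
  refl π := Contains.refl π.2
  trans _ _ _ := Contains.trans

theorem finite_setOf_length_eq (n : ℕ) : {π : SizedPerm | π.1 = n}.Finite :=
  (Set.finite_range (Sigma.mk n)).subset fun ⟨_, π⟩ h => by cases h; exact ⟨π, rfl⟩

theorem partiallyWellOrderedOn_inflationClosure (hS : S.Finite) :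
    {π | InflationClosure S π}.PartiallyWellOrderedOn SizedContains := by
  have : Finite S := hS
  refine partiallyWellOrderedOn_of_operations (rk := Sigma.fst)
    (op := fun (s : S) (α : Fin s.1.1 → SizedPerm) => (⟨_, inflate s.1.2 α⟩ : SizedPerm))
    (fun _ _ _ => Contains.inflate) (finite_setOf_length_eq 1).partiallyWellOrderedOn ?_
  rintro _ (π | ⟨hs, hα, h⟩)
  · exact Or.inl rfl
  · exact Or.inr ⟨⟨_, hs⟩, _,
      fun i => ⟨h i, (isOccurrence_blockPos _ _ i).contains, hα.length_lt i⟩, rfl⟩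

theorem exists_pattern_bound {T : Set SizedPerm} (hT : T.PartiallyWellOrderedOn SizedContains)
    (C : Set SizedPerm) :
    ∃ N, ∀ π ∈ T, (∀ γ : SizedPerm, γ.1 ≤ N → Contains γ.2 π.2 → γ ∈ C) → π ∈ C := by
  by_contra! h
  choose π hπT hπ hπC using h
  obtain ⟨g, hg⟩ := hT.exists_monotone_subseq hπT
  set N := (π (g 0)).1
  have N_le : N ≤ g N := g.strictMono.le_apply
  exact hπC (g 0) (hπ (g N) _ N_le (hg 0 N (Nat.zero_le N)))

end InflationClosure

section RespectsInflation

variable {Q Q' : Type*}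

/-- The value of `f` at an inflation of a simple permutation depends, apart from that simple
permutation, only on the values of `f` at the blocks. -/
def RespectsInflation (f : SizedPerm → Q) : Prop :=
  ∀ ⦃m : ℕ⦄ (σ : Perm m), IsSimple σ → 2 ≤ m → ∀ α β : Fin m → SizedPerm,
    (∀ i, 0 < (α i).1) → (∀ i, 0 < (β i).1) → (∀ i, f (α i) = f (β i)) →
      f ⟨_, inflate σ α⟩ = f ⟨_, inflate σ β⟩

theorem RespectsInflation.prodMk {f : SizedPerm → Q} {g : SizedPerm → Q'}
    (hf : RespectsInflation f) (hg : RespectsInflation g) :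
    RespectsInflation fun π => (f π, g π) :=
  fun _ σ hσ hm α β hα hβ h => Prod.ext
    (hf σ hσ hm α β hα hβ fun i => congrArg Prod.fst (h i))
    (hg σ hσ hm α β hα hβ fun i => congrArg Prod.snd (h i))

theorem respectsInflation_decomposableBy :
    RespectsInflation fun (π : SizedPerm) (u : Prop) => DecomposableBy u π.2 := by
  intro m σ hσ hm α β hα hβ _
  funext u
  exact propext ((decomposableBy_inflate_iff hσ hm hα).trans
    (decomposableBy_inflate_iff hσ hm hβ).symm)

theorem respectsInflation_contains (N : ℕ) :
    RespectsInflation fun (π : SizedPerm) (γ : {γ : SizedPerm // γ.1 ≤ N}) =>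
      Contains γ.1.2 π.2 := by
  intro m σ _ _ α β _ _ h
  have block_le (γ : {γ : SizedPerm // γ.1 ≤ N}) (c : Fin γ.1.1 → Fin m) (i : Fin m) :
      (block γ.1.2 c i).1 ≤ N := (contains_patternOn _ _).length_le.trans γ.2
  funext γ
  refine propext (contains_inflate_iff.trans (Iff.trans ?_ contains_inflate_iff.symm))
  refine exists_congr fun c => and_congr_right' (forall_congr' fun i => ?_)
  exact iff_of_eq (congrFun (h i) ⟨_, block_le γ c i⟩)

end RespectsInflation

section Enumeration

variable {Q : Type*} {f : SizedPerm → Q} {S : Set SizedPerm} {q : Q}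

theorem InflationClosure.length_pos {π : SizedPerm} (h : InflationClosure S π) : 0 < π.1 := by
  cases h with
  | one π => exact one_pos
  | @inflate s _ α hα _ =>
    exact (Nat.zero_le _).trans_lt (hα.length_lt ⟨0, two_pos.trans_le hα.two_le⟩)

/-- The permutations in the inflation closure of `S` at which `f` takes the value `q`. -/
def closureFiber (S : Set SizedPerm) (f : SizedPerm → Q) (q : Q) : Set SizedPerm :=
  {π | InflationClosure S π ∧ f π = q}

/-- The members of `S` together with values of `f` at the blocks for which inflations in normal
form exist and, provided `f` respects inflation and determines decomposability, all of these have
the value `q`. -/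
def inflationTypes (S : Set SizedPerm) (f : SizedPerm → Q) (q : Q) :
    Set (Σ s : S, Fin s.1.1 → Q) :=
  {x | ∃ α, IsReducedInflation x.1.1.2 α ∧ (∀ i, f (α i) = x.2 i) ∧
    f ⟨_, inflate x.1.1.2 α⟩ = q}

/-- The inflations described by `x`: those of its member of `S` by blocks from the inflation closure
at which `f` takes the values listed in `x`. -/
def inflations (S : Set SizedPerm) (f : SizedPerm → Q) (x : Σ s : S, Fin s.1.1 → Q) :
    Set SizedPerm :=
  (fun α => ⟨_, inflate x.1.1.2 α⟩) '' Set.univ.pi fun i => closureFiber S f (x.2 i)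

variable (hf : RespectsInflation f)
  (hdec : ∀ π π', f π = f π' → ∀ u, DecomposableBy u π.2 → DecomposableBy u π'.2)

include hf hdec

theorem isReducedInflation_of_mem_inflationTypes {x : Σ s : S, Fin s.1.1 → Q}
    (hx : x ∈ inflationTypes S f q) {β : Fin x.1.1.1 → SizedPerm}
    (hβ : β ∈ Set.univ.pi fun i => closureFiber S f (x.2 i)) :
    IsReducedInflation x.1.1.2 β ∧ f ⟨_, inflate x.1.1.2 β⟩ = q := by
  obtain ⟨α, hα, hαx, rfl⟩ := hx
  have hβ_pos (i) : 0 < (β i).1 := (hβ i trivial).1.length_pos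
  have hβα (i) : f (β i) = f (α i) := (hβ i trivial).2.trans (hαx i).symm
  exact ⟨⟨hα.isSimple, hα.two_le, hβ_pos,
    fun hm i hi hu => hα.headIndecomposable hm i hi (hdec _ _ (hβα i) _ hu)⟩,
    hf _ hα.isSimple hα.two_le β α hβ_pos hα.length_pos hβα⟩

theorem closureFiber_eq : closureFiber S f q =
    {π | π.1 = 1 ∧ f π = q} ∪ ⋃ x : inflationTypes S f q, inflations S f x := by
  ext π
  constructor
  · rintro ⟨π | @⟨s, hs, α, hα, h⟩, rfl⟩
    · exact Or.inl ⟨rfl, rfl⟩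
    · exact Or.inr (Set.mem_iUnion.mpr ⟨⟨⟨⟨s, hs⟩, fun i => f (α i)⟩, α, hα, fun _ => rfl, rfl⟩,
        α, fun i _ => ⟨h i, rfl⟩, rfl⟩)
  · rintro (⟨hπ, rfl⟩ | hπ)
    · obtain ⟨_, π⟩ := π
      obtain rfl := hπ
      exact ⟨.one π, rfl⟩
    · obtain ⟨⟨x, hx⟩, α, hα, rfl⟩ := Set.mem_iUnion.mp hπ
      obtain ⟨hred, hq⟩ := isReducedInflation_of_mem_inflationTypes hf hdec hx hα
      exact ⟨.inflate x.1.2 hred fun i => (hα i trivial).1, hq⟩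

theorem injOn_inflate {x : Σ s : S, Fin s.1.1 → Q} (hx : x ∈ inflationTypes S f q) :
    (Set.univ.pi fun i => closureFiber S f (x.2 i)).InjOn
      fun α => (⟨_, inflate x.1.1.2 α⟩ : SizedPerm) := by
  intro α hα β hβ h
  exact eq_of_heq (Sigma.mk.inj_iff.mp
    ((isReducedInflation_of_mem_inflationTypes hf hdec hx hα).1.sigma_eq
      (isReducedInflation_of_mem_inflationTypes hf hdec hx hβ).1 h)).2

theorem pairwise_disjoint_inflations :
    Pairwise fun x y : inflationTypes S f q => Disjoint (inflations S f x) (inflations S f y) := by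
  intro ⟨x, hx⟩ ⟨y, hy⟩ hxy
  refine Set.disjoint_left.mpr ?_
  rintro _ ⟨α, hα, rfl⟩ ⟨β, hβ, h⟩
  refine hxy (Subtype.ext ?_)
  have sigma_eq := (isReducedInflation_of_mem_inflationTypes hf hdec hy hβ).1.sigma_eq
    (isReducedInflation_of_mem_inflationTypes hf hdec hx hα).1 h
  obtain ⟨⟨s, hs⟩, t⟩ := x
  obtain ⟨⟨s', hs'⟩, t'⟩ := y
  obtain rfl : s' = s := congrArg Sigma.fst sigma_eq
  obtain rfl : β = α := eq_of_heq (Sigma.mk.inj_iff.mp sigma_eq).2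
  exact Sigma.ext rfl (heq_of_eq (funext fun i => (hα i trivial).2.symm.trans (hβ i trivial).2))

theorem sizeGenFun_closureFiber [Fintype (inflationTypes S f q)] :
    sizeGenFun Sigma.fst (closureFiber S f q) =
      (Polynomial.monomial 1 ({π : SizedPerm | π.1 = 1 ∧ f π = q}.ncard : ℚ) : Polynomial ℚ) +
        ∑ x : inflationTypes S f q, ∏ i, sizeGenFun Sigma.fst (closureFiber S f (x.1.2 i)) := by
  have disjoint : Disjoint {π | π.1 = 1 ∧ f π = q}
      (⋃ x : inflationTypes S f q, inflations S f x) := by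
    rw [Set.disjoint_iUnion_right]
    rintro ⟨x, hx⟩
    refine Set.disjoint_right.mpr ?_
    rintro _ ⟨α, hα, rfl⟩ ⟨length_one, -⟩
    have hred := (isReducedInflation_of_mem_inflationTypes hf hdec hx hα).1
    let i : Fin x.1.1.1 := ⟨0, two_pos.trans_le hred.two_le⟩
    exact (lt_of_le_of_lt (hred.length_pos i) (hred.length_lt i)).ne' length_one
  rw [closureFiber_eq hf hdec, sizeGenFun_union finite_setOf_length_eq disjoint,
    sizeGenFun_of_forall_size_eq fun π hπ => hπ.1,
    sizeGenFun_iUnion finite_setOf_length_eq (pairwise_disjoint_inflations hf hdec)]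
  congr 1
  refine Finset.sum_congr rfl fun x _ => ?_
  rw [inflations, sizeGenFun_image (injOn_inflate hf hdec x.2) fun α => rfl,
    sizeGenFun_pi finite_setOf_length_eq]

theorem isAlgebraic_sizeGenFun_closureFiber [Finite Q] (hS : S.Finite) :
    IsAlgebraic (Polynomial ℚ) (sizeGenFun Sigma.fst (closureFiber S f q)) := by
  have : Finite S := hS
  have (q : Q) : Fintype (inflationTypes S f q) := Fintype.ofFinite _
  refine isAlgebraic_of_multiplicative_system
    (F := fun q => sizeGenFun Sigma.fst (closureFiber S f q))
    (fun q => constantCoeff_sizeGenFun fun π hπ => hπ.1.length_pos)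
    (κ := fun q => inflationTypes S f q) (m := fun q x => x.1.1.1.1) (fun q x => ?_)
    (fun q x => x.1.2) _ (fun q => sizeGenFun_closureFiber hf hdec) q
  obtain ⟨α, hα, -⟩ := x.2
  exact hα.two_le

omit hdec

theorem isAlgebraic_sizeGenFun_inflationClosure [Finite Q] (hS : S.Finite) (A : Set Q) :
    IsAlgebraic (Polynomial ℚ)
      (sizeGenFun Sigma.fst {π | InflationClosure S π ∧ f π ∈ A}) := by
  let g : SizedPerm → Q × (Prop → Prop) := fun π => (f π, fun u => DecomposableBy u π.2)
  have hg : RespectsInflation g := hf.prodMk respectsInflation_decomposableBy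
  have g_dec (π π') (h : g π = g π') (u) : DecomposableBy u π.2 → DecomposableBy u π'.2 :=
    (congrFun (congrArg Prod.snd h) u).mp
  have eq_iUnion : {π | InflationClosure S π ∧ f π ∈ A} =
      ⋃ q : {q : Q × (Prop → Prop) // q.1 ∈ A}, closureFiber S g q := by
    ext π
    simp only [Set.mem_iUnion]
    exact ⟨fun h => ⟨⟨g π, h.2⟩, h.1, rfl⟩, fun ⟨q, h, hq⟩ => ⟨h, show (g π).1 ∈ A from hq ▸ q.2⟩⟩
  have disjoint : Pairwise fun q q' : {q : Q × (Prop → Prop) // q.1 ∈ A} =>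
      Disjoint (closureFiber S g q) (closureFiber S g q') := fun q q' hne =>
    Set.disjoint_left.mpr fun π h h' => hne (Subtype.ext (h.2.symm.trans h'.2))
  have := Fintype.ofFinite {q : Q × (Prop → Prop) // q.1 ∈ A}
  rw [eq_iUnion, sizeGenFun_iUnion finite_setOf_length_eq disjoint]
  exact (Subalgebra.algebraicClosure (Polynomial ℚ) (PowerSeries ℚ)).sum_mem fun q _ =>
    isAlgebraic_sizeGenFun_closureFiber hg g_dec hS

end Enumeration

theorem genFun_eq_sizeGenFun (A : ∀ n, Set (Perm n)) :
    genFun A = sizeGenFun Sigma.fst {π : SizedPerm | 0 < π.1 ∧ π.2 ∈ A π.1} := by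
  ext n
  rw [genFun, sizeGenFun, PowerSeries.coeff_mk, PowerSeries.coeff_mk]
  split_ifs with hn
  · have fibre_empty : {π ∈ {π : SizedPerm | 0 < π.1 ∧ π.2 ∈ A π.1} | π.1 = n} = ∅ :=
      Set.eq_empty_of_forall_notMem fun π hπ => hπ.1.1.ne' (hπ.2.trans hn)
    rw [fibre_empty, Set.ncard_empty, Nat.cast_zero]
  · have fibre_eq : {π ∈ {π : SizedPerm | 0 < π.1 ∧ π.2 ∈ A π.1} | π.1 = n} =
        Sigma.mk n '' A n := by
      ext ⟨k, π⟩
      constructor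
      · rintro ⟨⟨-, hπ⟩, rfl⟩
        exact ⟨π, hπ, rfl⟩
      · rintro ⟨τ, hτ, h⟩
        cases h
        exact ⟨⟨Nat.pos_of_ne_zero hn, hτ⟩, rfl⟩
    rw [fibre_eq, Set.ncard_image_of_injective _ sigma_mk_injective, Nat.card_coe_set_eq]

theorem isAlgebraicOverQx_genFun_of_respectsInflation {C : ∀ n, Set (Perm n)}
    (hC : IsPermClass C) (hfin : FinitelyManySimples C) {Q : Type*} [Finite Q]
    {f : SizedPerm → Q} (hf : RespectsInflation f) (A : Set Q) :
    IsAlgebraicOverQx (genFun fun n => {π : Perm n | π ∈ C n ∧ f ⟨n, π⟩ ∈ A}) := by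
  let S : Set SizedPerm := {s | 2 ≤ s.1 ∧ s.2 ∈ C s.1 ∧ IsSimple s.2}
  have hS : S.Finite := hfin.subset fun s hs => hs.2
  obtain ⟨N, hN⟩ := exists_pattern_bound (partiallyWellOrderedOn_inflationClosure hS)
    {π | π.2 ∈ C π.1}
  have : Finite {γ : SizedPerm // γ.1 ≤ N} :=
    ((Set.finite_Iic N).biUnion fun n _ => finite_setOf_length_eq n).subset fun γ hγ =>
      Set.mem_iUnion₂.mpr ⟨γ.1, hγ, rfl⟩
  let A' : Set (Q × ({γ : SizedPerm // γ.1 ≤ N} → Prop)) :=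
    {q | q.1 ∈ A ∧ ∀ γ, q.2 γ → γ.1.2 ∈ C γ.1.1}
  have setOf_eq : {π : SizedPerm | 0 < π.1 ∧ π.2 ∈ C π.1 ∧ f π ∈ A} =
      {π | InflationClosure S π ∧ (f π, fun γ => Contains γ.1.2 π.2) ∈ A'} := by
    ext π
    constructor
    · rintro ⟨hpos, hπ, hA⟩
      exact ⟨inflationClosure_of_mem hC hpos hπ, hA, fun γ hγ => hC _ _ hπ hγ⟩
    · rintro ⟨h, hA, hγ⟩
      exact ⟨h.length_pos, hN π h fun γ hle => hγ ⟨γ, hle⟩, hA⟩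
  rw [genFun_eq_sizeGenFun]
  exact setOf_eq ▸ isAlgebraic_sizeGenFun_inflationClosure
    (hf.prodMk (respectsInflation_contains N)) hS A'

section DescentPatterns

variable {m n : ℕ} {d : Prop}

/-- There is a descent at position `i`; at the last position, which has no successor, this is taken
to mean `d`. -/
def DescentAt (d : Prop) (π : Perm n) (i : Fin n) : Prop :=
  if h : (i : ℕ) + 1 < n then π ⟨(i : ℕ) + 1, h⟩ < π i else d

/-- The descents of `π` are exactly its even values, if values are counted from `1 + e`. -/
def ParityDescents (e : ZMod 2) (d : Prop) (π : Perm n) : Prop :=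
  ∀ i : Fin n, ((π i : ℕ) : ZMod 2) + 1 + e = 0 ↔ DescentAt d π i

theorem descentAt_iff_of_succ_eq {π : Perm n} {i j : Fin n} (hij : (i : ℕ) + 1 = j) :
    DescentAt d π i ↔ π j < π i := by
  simp only [DescentAt, hij, Fin.is_lt, dif_pos, Fin.eta]

theorem descentAt_iff_of_succ_eq_length {π : Perm n} {i : Fin n} (hi : (i : ℕ) + 1 = n) :
    DescentAt d π i ↔ d := by
  simp only [DescentAt, hi, lt_irrefl, dif_neg, not_false_eq_true]

theorem dumont_iff_parityDescents {π : Perm n} : Dumont π ↔ ParityDescents 0 False π := by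
  refine forall_congr' fun i => ?_
  have cast_eq_zero_iff : ((π i : ℕ) : ZMod 2) + 1 + 0 = 0 ↔ Even ((π i : ℕ) + 1) := by
    rw [← ZMod.natCast_eq_zero_iff_even, Nat.cast_add_one, add_zero]
  rw [cast_eq_zero_iff, ← Nat.not_even_iff_odd]
  obtain hi | hi : (i : ℕ) + 1 < n ∨ (i : ℕ) + 1 = n := (Nat.succ_le_of_lt i.2).lt_or_eq
  · have succ_ne : π ⟨(i : ℕ) + 1, hi⟩ ≠ π i := π.injective.ne (by simp [Fin.ext_iff])
    rw [descentAt_iff_of_succ_eq (j := ⟨(i : ℕ) + 1, hi⟩) rfl]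
    have not_last : (i : ℕ) + 1 ≠ n := hi.ne
    grind
  · rw [descentAt_iff_of_succ_eq_length hi]
    simp [hi]

variable {σ : Perm m} {α : Fin m → SizedPerm} {i : Fin m} {a : Fin (α i).1}

theorem blockPos_succ_eq {b : Fin (α i).1} (hab : (a : ℕ) + 1 = b) :
    (blockPos α i a : ℕ) + 1 = blockPos α i b := by
  rw [blockPos_val, blockPos_val, ← hab, add_assoc]

theorem blockPos_succ_eq_sum_Iic (ha : (a : ℕ) + 1 = (α i).1) :
    (blockPos α i a : ℕ) + 1 = ∑ k ∈ Finset.Iic i, (α k).1 := by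
  rw [blockPos_val, add_assoc, ha, ← Finset.Iio_insert, Finset.sum_insert (by simp), add_comm]

theorem blockPos_succ_eq_blockPos_zero (ha : (a : ℕ) + 1 = (α i).1) {j : Fin m}
    (hij : (i : ℕ) + 1 = j) (hj : 0 < (α j).1) :
    (blockPos α i a : ℕ) + 1 = blockPos α j ⟨0, hj⟩ := by
  have Iic_eq_Iio : Finset.Iic i = Finset.Iio j := by
    ext k
    simp only [Finset.mem_Iic, Finset.mem_Iio, Fin.le_def, Fin.lt_def]
    omega
  rw [blockPos_succ_eq_sum_Iic ha, blockPos_val, Iic_eq_Iio, add_zero]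

theorem blockPos_succ_eq_length (ha : (a : ℕ) + 1 = (α i).1) (hi : (i : ℕ) + 1 = m) :
    (blockPos α i a : ℕ) + 1 = ∑ k, (α k).1 := by
  have Iic_eq_univ : Finset.Iic i = Finset.univ := by
    ext k
    simp only [Finset.mem_Iic, Finset.mem_univ, Fin.le_def, iff_true]
    omega
  rw [blockPos_succ_eq_sum_Iic ha, Iic_eq_univ]

theorem descentAt_inflate (hα : ∀ i, 0 < (α i).1) :
    DescentAt d (inflate σ α) (blockPos α i a) ↔ DescentAt (DescentAt d σ i) (α i).2 a := by
  obtain ha | ha : (a : ℕ) + 1 < (α i).1 ∨ (a : ℕ) + 1 = (α i).1 :=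
    (Nat.succ_le_of_lt a.2).lt_or_eq
  · rw [descentAt_iff_of_succ_eq (blockPos_succ_eq (b := ⟨a + 1, ha⟩) rfl),
      descentAt_iff_of_succ_eq (j := ⟨a + 1, ha⟩) rfl, (isOccurrence_blockPos σ α i).lt_iff]
  rw [descentAt_iff_of_succ_eq_length ha]
  obtain hi | hi : (i : ℕ) + 1 < m ∨ (i : ℕ) + 1 = m := (Nat.succ_le_of_lt i.2).lt_or_eq
  · have next_ne : (⟨i + 1, hi⟩ : Fin m) ≠ i := by simp [Fin.ext_iff]
    rw [descentAt_iff_of_succ_eq (blockPos_succ_eq_blockPos_zero (j := ⟨i + 1, hi⟩) ha rfl (hα _)),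
      descentAt_iff_of_succ_eq (j := ⟨i + 1, hi⟩) rfl,
      (isBlockMap_inflate σ α).lt_iff _ _ (by simpa using next_ne), blockIndex_blockPos,
      blockIndex_blockPos]
  · rw [descentAt_iff_of_succ_eq_length (blockPos_succ_eq_length ha hi),
      descentAt_iff_of_succ_eq_length hi]

theorem parityDescents_inflate (hα : ∀ i, 0 < (α i).1) {e : ZMod 2} :
    ParityDescents e d (inflate σ α) ↔ ∀ i,
      ParityDescents (∑ k ∈ Finset.Iio (σ i), ((α (σ.symm k)).1 : ZMod 2) + e)
        (DescentAt d σ i) (α i).2 := by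
  have shifted_value (i a) : ((inflate σ α (blockPos α i a) : ℕ) : ZMod 2) + 1 + e =
      ((α i).2 a : ℕ) + 1 + (∑ k ∈ Finset.Iio (σ i), ((α (σ.symm k)).1 : ZMod 2) + e) := by
    rw [inflate_blockPos_val]
    push_cast
    ring
  constructor
  · intro h i a
    rw [← descentAt_inflate hα, ← shifted_value]
    exact h _
  · intro h p
    obtain ⟨i, a, rfl⟩ := exists_eq_blockPos α p
    rw [descentAt_inflate hα, shifted_value]
    exact h i a

theorem respectsInflation_parityDescents :
    RespectsInflation fun π : SizedPerm =>
      ((π.1 : ZMod 2), fun (e : ZMod 2) (d : Prop) => ParityDescents e d π.2) := by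
  intro m σ _ _ α β hα hβ h
  have length_eq (i) : ((α i).1 : ZMod 2) = (β i).1 := congrArg Prod.fst (h i)
  have parityDescents_eq (i e d) : ParityDescents e d (α i).2 = ParityDescents e d (β i).2 :=
    congrFun₂ (congrArg Prod.snd (h i)) e d
  refine Prod.ext ?_ (funext₂ fun e d => ?_)
  · simp only [Nat.cast_sum, length_eq]
  · simp only [parityDescents_inflate hα, parityDescents_inflate hβ, length_eq, parityDescents_eq]

end DescentPatterns

/-- If `C` is a permutation class containing only finitely many simple permutations,
then the generating function of the set of Dumont permutations of the first kind in `C`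
is algebraic over `ℚ[x]`. -/
theorem statement3 (C : ∀ n, Set (Perm n)) (hC : IsPermClass C)
    (hfin : FinitelyManySimples C) :
    IsAlgebraicOverQx (genFun fun n => {π : Perm n | π ∈ C n ∧ Dumont π}) := by
  simp only [dumont_iff_parityDescents]
  exact isAlgebraicOverQx_genFun_of_respectsInflation hC hfin respectsInflation_parityDescents
    {q | q.2 0 False}
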